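/- arXiv:2604.21135 — 14 statements merged into one kernel-verified Lean document; each statement's English description precedes it below -/
import Mathlib

section
/- If a (p,m,n) signed graph S whose underlying graph is a tree admits an additively graceful labeling, then n ≤ 2. -/
/-- A signed graph on vertex type `V`: a finite set of positive edges and a
finite set of negative edges, disjoint from one another, with no loops. -/
structure SignedGraph (V : Type) [DecidableEq V] where
  posEdges : Finset (Sym2 V)
  negEdges : Finset (Sym2 V)
  disjoint : Disjoint posEdges negEdges
  pos_not_diag : ∀ e ∈ posEdges, ¬ e.IsDiag
  neg_not_diag : ∀ e ∈ negEdges, ¬ e.IsDiag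

/-- Induced label on a positive edge: `|f u - f v|`. -/
def posLabel {V : Type} (f : V → ℕ) : Sym2 V → ℕ :=
  Sym2.lift ⟨fun u v => Nat.dist (f u) (f v), fun u v => Nat.dist_comm _ _⟩

/-- Induced label on a negative edge: `f u + f v`. -/
def negLabel {V : Type} (f : V → ℕ) : Sym2 V → ℕ :=
  Sym2.lift ⟨fun u v => f u + f v, fun u v => Nat.add_comm _ _⟩

/-- `f` is an additively graceful labeling of the signed graph `S`:
it is an injection into `{0, 1, …, m + ⌈(n+1)/2⌉}` whose induced labels on the
positive edges are exactly `{1, …, m}` and on the negative edges exactly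
`{1, …, n}`, where `m` (resp. `n`) is the number of positive (negative) edges.
(Note that `⌈(n+1)/2⌉ = (n+2)/2` with natural-number division.) -/
def IsAddGraceful {V : Type} [DecidableEq V] (S : SignedGraph V) (f : V → ℕ) : Prop :=
  Function.Injective f ∧
  (∀ v : V, f v ≤ S.posEdges.card + (S.negEdges.card + 2) / 2) ∧
  S.posEdges.image (posLabel f) = Finset.Icc 1 S.posEdges.card ∧
  S.negEdges.image (negLabel f) = Finset.Icc 1 S.negEdges.card

/-- If a `(p,m,n)` signed graph `S` whose underlying graph is
a tree admits an additively graceful labeling, then `n ≤ 2`. -/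
theorem negEdges_card_le_two_of_tree {V : Type} [DecidableEq V] [Fintype V]
    (S : SignedGraph V)
    (htree : (SimpleGraph.fromEdgeSet (↑(S.posEdges ∪ S.negEdges) : Set (Sym2 V))).IsTree)
    (f : V → ℕ) (hf : IsAddGraceful S f) :
    S.negEdges.card ≤ 2 := by
  classical
  obtain ⟨hinj, hb, -, -⟩ := hf
  have h1 := htree.card_edgeFinset
  have h2 : (SimpleGraph.fromEdgeSet
      (↑(S.posEdges ∪ S.negEdges) : Set (Sym2 V))).edgeFinset = S.posEdges ∪ S.negEdges := by
    ext e
    rw [SimpleGraph.mem_edgeFinset, SimpleGraph.edgeSet_fromEdgeSet]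
    constructor
    · intro h
      exact Finset.mem_coe.1 h.1
    · intro h
      refine ⟨Finset.mem_coe.2 h, fun hd => ?_⟩
      rcases Finset.mem_union.1 h with h | h
      · exact S.pos_not_diag e h hd
      · exact S.neg_not_diag e h hd
  rw [h2, Finset.card_union_of_disjoint S.disjoint] at h1
  have h3 : Fintype.card V ≤
      (Finset.range (S.posEdges.card + (S.negEdges.card + 2) / 2 + 1)).card := by
    rw [← Finset.card_univ]
    exact Finset.card_le_card_of_injOn f
      (fun v _ => by simpa using Nat.lt_succ_of_le (hb v)) hinj.injOn
  rw [Finset.card_range] at h3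
  omega
end

section
/- A signed graph S whose underlying graph is a star K_{1,k} (a central vertex joined to k ≥ 1 pendant vertices), with m positive and n negative edges, is additively graceful if and only if n = 0, or n = 1, or S is the star K_{1,2} (the path P₃) both of whose edges are negative. -/
/-- Vertex type of a signed star: the center, `a` positive pendants, `b` negative pendants. -/
abbrev StarV (a b : ℕ) : Type := Unit ⊕ (Fin a ⊕ Fin b)

/-- the central vertex -/
def ctr {a b : ℕ} : StarV a b := Sum.inl ()
/-- the end of the `i`-th positive pendant edge -/
def pp {a b : ℕ} (i : Fin a) : StarV a b := Sum.inr (Sum.inl i)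
/-- the end of the `i`-th negative pendant edge -/
def np {a b : ℕ} (i : Fin b) : StarV a b := Sum.inr (Sum.inr i)

/-- The signed star `K_{1,a+b}` with `a` positive and `b` negative pendant edges. -/
def starS (a b : ℕ) : SignedGraph (StarV a b) where
  posEdges := Finset.univ.image (fun i : Fin a => s(ctr, pp i))
  negEdges := Finset.univ.image (fun i : Fin b => s(ctr, np i))
  disjoint := by
    rw [Finset.disjoint_left]
    intro e he1 he2
    simp only [Finset.mem_image, Finset.mem_univ, true_and] at he1 he2
    obtain ⟨i, rfl⟩ := he1
    obtain ⟨j, h⟩ := he2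
    simp [ctr, pp, np, Sym2.eq_iff] at h
  pos_not_diag := by
    intro e he
    simp only [Finset.mem_image, Finset.mem_univ, true_and] at he
    obtain ⟨i, rfl⟩ := he
    simp [ctr, pp, Sym2.mk_isDiag_iff]
  neg_not_diag := by
    intro e he
    simp only [Finset.mem_image, Finset.mem_univ, true_and] at he
    obtain ⟨i, rfl⟩ := he
    simp [ctr, np, Sym2.mk_isDiag_iff]

theorem starS_pos_card (a b : ℕ) : (starS a b).posEdges.card = a := by
  unfold starS
  rw [Finset.card_image_of_injective]
  · simp
  · intro i j h
    simpa [ctr, pp, Sym2.eq_iff] using h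

theorem starS_neg_card (a b : ℕ) : (starS a b).negEdges.card = b := by
  unfold starS
  rw [Finset.card_image_of_injective]
  · simp
  · intro i j h
    simpa [ctr, np, Sym2.eq_iff] using h

theorem isAddGraceful_star_iff (a b : ℕ) (f : StarV a b → ℕ) :
    IsAddGraceful (starS a b) f ↔ Function.Injective f ∧
      (∀ v, f v ≤ a + (b + 2) / 2) ∧
      (∀ k, (∃ i : Fin a, Nat.dist (f ctr) (f (pp i)) = k) ↔ 1 ≤ k ∧ k ≤ a) ∧
      (∀ k, (∃ i : Fin b, f ctr + f (np i) = k) ↔ 1 ≤ k ∧ k ≤ b) := by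
  unfold IsAddGraceful
  rw [starS_pos_card, starS_neg_card]
  simp [starS, Finset.ext_iff, posLabel, negLabel]

/-- A signed star `K_{1,k}` (`k = m + n ≥ 1`) with `m` positive
and `n` negative edges is additively graceful if and only if `n = 0`, or
`n = 1`, or it is the all-negative star `K_{1,2}` (i.e. `m = 0` and `n = 2`). -/
theorem star_addGraceful_iff (m n : ℕ) (hk : 1 ≤ m + n) :
    (∃ f : StarV m n → ℕ, IsAddGraceful (starS m n) f) ↔
      n = 0 ∨ n = 1 ∨ (m = 0 ∧ n = 2) := by
  simp only [isAddGraceful_star_iff]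
  constructor
  · rintro ⟨f, hinj, hb, hp, hn⟩
    by_contra hcon
    have hn2 : 2 ≤ n := by omega
    obtain ⟨i, hi⟩ := (hn 1).2 ⟨le_refl _, by omega⟩
    obtain ⟨j, hj⟩ := (hn 2).2 ⟨by omega, hn2⟩
    have hjc : f ctr ≠ f (np j) := fun h => by
      have := hinj h
      simp [ctr, np] at this
    have hc : f ctr = 0 := by omega
    by_cases hm : m = 0
    · obtain ⟨l, hl⟩ := (hn n).2 ⟨by omega, le_refl _⟩
      have := hb (np l)
      omega
    · obtain ⟨l, hl⟩ := (hp 1).2 ⟨le_refl _, by omega⟩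
      have h1 : f (pp l) = f (np i) := by
        simp only [Nat.dist] at hl
        omega
      have := hinj h1
      simp [pp, np] at this
  · intro h
    by_cases h1 : n = 1
    · subst h1
      refine ⟨Sum.elim (fun _ => 1) (Sum.elim (fun i => i.val + 2) (fun _ => 0)), ?_, ?_, ?_, ?_⟩
      · rintro (x | x | x) (y | y | y) hxy <;> simp at hxy ⊢ <;> omega
      · rintro (x | x | x) <;> simp <;> omega
      · intro k
        constructor
        · rintro ⟨i, hi⟩
          simp [ctr, pp, Nat.dist] at hi
          omega
        · rintro ⟨hk1, hk2⟩
          refine ⟨⟨k - 1, by omega⟩, ?_⟩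
          simp [ctr, pp, Nat.dist]
          omega
      · intro k
        simp [ctr, np]
        omega
    · refine ⟨Sum.elim (fun _ => 0) (Sum.elim (fun i => i.val + 1) (fun i => i.val + 1)),
        ?_, ?_, ?_, ?_⟩
      · rintro (x | x | x) (y | y | y) hxy <;> simp at hxy ⊢ <;> omega
      · rintro (x | x | x) <;> simp <;> omega
      · intro k
        constructor
        · rintro ⟨i, hi⟩
          simp [ctr, pp, Nat.dist] at hi
          omega
        · rintro ⟨hk1, hk2⟩
          refine ⟨⟨k - 1, by omega⟩, ?_⟩
          simp [ctr, pp, Nat.dist]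
          omega
      · intro k
        constructor
        · rintro ⟨i, hi⟩
          simp [ctr, np] at hi
          omega
        · rintro ⟨hk1, hk2⟩
          refine ⟨⟨k - 1, by omega⟩, ?_⟩
          simp [ctr, np]
          omega
end

section
/- Let S be the signed star with central vertex z, one negative pendant edge zu₁, and m ≥ 1 positive pendant edges zv₁,…,zv_m. Then every additively graceful labeling f of S satisfies f(z)=1, f(u₁)=0, and {f(v₁),…,f(v_m)} = {2,3,…,m+1}; that is, the additively graceful labeling of S is unique up to permutation of the labels among the positive pendant vertices v₁,…,v_m. -/
/-- For the signed star with center `z`, one negative pendant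
edge `z u₁` and `m ≥ 1` positive pendant edges `z vᵢ`, every additively
graceful labeling `f` satisfies `f z = 1`, `f u₁ = 0` and
`{f v₁, …, f v_m} = {2, 3, …, m + 1}`. -/
theorem star_one_neg_unique (m : ℕ) (hm : 1 ≤ m) (f : StarV m 1 → ℕ)
    (hf : IsAddGraceful (starS m 1) f) :
    f ctr = 1 ∧ f (np 0) = 0 ∧
      Finset.univ.image (fun i : Fin m => f (pp i)) = Finset.Icc 2 (m + 1) := by
  obtain ⟨hinj, -, hp, hn⟩ := hf
  have cp : (starS m 1).posEdges.card = m := by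
    unfold starS
    rw [Finset.card_image_of_injective]
    · simp
    · intro i j h
      simpa [ctr, pp, Sym2.eq_iff] using h
  have cn : (starS m 1).negEdges.card = 1 := by
    simp [starS]
  rw [cp] at hp
  rw [cn] at hn
  have h1 : f ctr + f (np 0) = 1 := by
    have : negLabel f s(ctr, np 0) ∈ (starS m 1).negEdges.image (negLabel f) :=
      Finset.mem_image_of_mem _ (by simp [starS])
    rw [hn] at this
    simpa [negLabel] using this
  have hd : ∀ i : Fin m, 1 ≤ Nat.dist (f ctr) (f (pp i)) ∧ Nat.dist (f ctr) (f (pp i)) ≤ m := by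
    intro i
    have : posLabel f s(ctr, pp i) ∈ (starS m 1).posEdges.image (posLabel f) :=
      Finset.mem_image_of_mem _ (Finset.mem_image_of_mem _ (Finset.mem_univ i))
    rw [hp] at this
    simpa [posLabel] using this
  have hs : ∀ k, 1 ≤ k → k ≤ m → ∃ i : Fin m, Nat.dist (f ctr) (f (pp i)) = k := by
    intro k h1 h2
    have : k ∈ (starS m 1).posEdges.image (posLabel f) := by
      rw [hp]
      exact Finset.mem_Icc.2 ⟨h1, h2⟩
    simpa [starS, posLabel] using this
  have hne : ∀ i : Fin m, f (pp i) ≠ f (np 0) := by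
    intro i h
    simpa [pp, np] using hinj h
  simp only [Nat.dist] at hd hs
  have hc : f ctr = 1 := by
    by_contra hc
    obtain ⟨i, hi⟩ := hs 1 le_rfl hm
    have := hne i
    omega
  have hu : f (np 0) = 0 := by omega
  refine ⟨hc, hu, ?_⟩
  ext k
  simp only [Finset.mem_image, Finset.mem_univ, true_and, Finset.mem_Icc]
  constructor
  · rintro ⟨i, rfl⟩
    have := hd i
    have := hne i
    omega
  · rintro ⟨h2, h3⟩
    obtain ⟨i, hi⟩ := hs (k - 1) (by omega) (by omega)
    have := hne i
    exact ⟨i, by omega⟩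
end

section
/- Let S be the signed double star consisting of a positive edge z₁z₂, together with l ≥ 0 positive pendant edges z₁v₁,…,z₁v_l and one negative pendant edge z₁u attached at z₁, and r ≥ 0 positive pendant edges z₂w₁,…,z₂w_r attached at z₂ (so S is a (l+r+3, l+r+1, 1) signed graph). Then S is additively graceful. -/
/-- Vertex type of a double star: the two centers `z₁, z₂`, the `a` positive
pendant neighbours and `b` negative pendant neighbours of `z₁`, and the `c`
positive pendant neighbours of `z₂`. -/
abbrev DSV (a b c : ℕ) : Type := (Unit ⊕ Unit) ⊕ (Fin a ⊕ Fin b ⊕ Fin c)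

/-- the first central vertex `z₁` -/
def z1 {a b c : ℕ} : DSV a b c := Sum.inl (Sum.inl ())
/-- the second central vertex `z₂` -/
def z2 {a b c : ℕ} : DSV a b c := Sum.inl (Sum.inr ())
/-- the end `vᵢ` of the `i`-th positive pendant edge at `z₁` -/
def vv {a b c : ℕ} (i : Fin a) : DSV a b c := Sum.inr (Sum.inl i)
/-- the end `uᵢ` of the `i`-th negative pendant edge at `z₁` -/
def uu {a b c : ℕ} (i : Fin b) : DSV a b c := Sum.inr (Sum.inr (Sum.inl i))
/-- the end `wᵢ` of the `i`-th positive pendant edge at `z₂` -/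
def ww {a b c : ℕ} (i : Fin c) : DSV a b c := Sum.inr (Sum.inr (Sum.inr i))

/-- The signed double star with a *positive* central edge `z₁z₂`,
`a` positive and `b` negative pendant edges at `z₁`, and `c` positive pendant
edges at `z₂`. -/
def doubleStarPos (a b c : ℕ) : SignedGraph (DSV a b c) where
  posEdges :=
    {s(z1, z2)} ∪ Finset.univ.image (fun i : Fin a => s(z1, vv i)) ∪
      Finset.univ.image (fun i : Fin c => s(z2, ww i))
  negEdges := Finset.univ.image (fun i : Fin b => s(z1, uu i))
  disjoint := by
    rw [Finset.disjoint_left]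
    intro e he1 he2
    simp only [Finset.mem_union, Finset.mem_singleton, Finset.mem_image,
      Finset.mem_univ, true_and] at he1 he2
    obtain ⟨j, rfl⟩ := he2
    rcases he1 with (h | ⟨i, h⟩) | ⟨i, h⟩ <;>
      simp [z1, z2, vv, uu, ww, Sym2.eq_iff] at h
  pos_not_diag := by
    intro e he
    simp only [Finset.mem_union, Finset.mem_singleton, Finset.mem_image,
      Finset.mem_univ, true_and] at he
    rcases he with (rfl | ⟨i, rfl⟩) | ⟨i, rfl⟩ <;>
      simp [z1, z2, vv, ww, Sym2.mk_isDiag_iff]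
  neg_not_diag := by
    intro e he
    simp only [Finset.mem_image, Finset.mem_univ, true_and] at he
    obtain ⟨i, rfl⟩ := he
    simp [z1, uu, Sym2.mk_isDiag_iff]

theorem card_pos_aux (l r : ℕ) : (doubleStarPos l 1 r).posEdges.card = l + r + 1 := by
  unfold doubleStarPos
  simp only
  rw [Finset.card_union_of_disjoint, Finset.card_union_of_disjoint,
    Finset.card_image_of_injective, Finset.card_image_of_injective]
  · simp; omega
  · intro i j h
    simpa [z1, z2, vv, uu, ww, Sym2.eq_iff] using h
  · intro i j h
    simpa [z1, z2, vv, uu, ww, Sym2.eq_iff] using h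
  · simp [z1, z2, vv, uu, ww, Sym2.eq_iff]
  · rw [Finset.disjoint_left]
    intro e he1 he2
    simp only [Finset.mem_union, Finset.mem_singleton, Finset.mem_image,
      Finset.mem_univ, true_and] at he1 he2
    obtain ⟨j, rfl⟩ := he2
    rcases he1 with h | ⟨i, h⟩ <;>
      simp [z1, z2, vv, ww, Sym2.eq_iff] at h

theorem card_neg_aux (l r : ℕ) : (doubleStarPos l 1 r).negEdges.card = 1 := by
  simp [doubleStarPos]

/-- The labeling: `u ↦ 0`, `z₁ ↦ 1`, `wᵢ ↦ 2 + i`, `z₂ ↦ r + 2`, `vᵢ ↦ r + 3 + i`. -/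
def labAux (l r : ℕ) : DSV l 1 r → ℕ
  | Sum.inl (Sum.inl _) => 1
  | Sum.inl (Sum.inr _) => r + 2
  | Sum.inr (Sum.inl i) => r + 3 + i.val
  | Sum.inr (Sum.inr (Sum.inl _)) => 0
  | Sum.inr (Sum.inr (Sum.inr i)) => 2 + i.val

/-- The signed double star with positive central edge `z₁z₂`,
`l ≥ 0` positive pendant edges and one negative pendant edge at `z₁`, and
`r ≥ 0` positive pendant edges at `z₂`, is additively graceful. -/
theorem doubleStar_onePendantNeg_addGraceful (l r : ℕ) :
    ∃ f : DSV l 1 r → ℕ, IsAddGraceful (doubleStarPos l 1 r) f := by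
  refine ⟨labAux l r, ?_, ?_, ?_, ?_⟩
  · rintro ((⟨⟩ | ⟨⟩) | (i | i | i)) ((⟨⟩ | ⟨⟩) | (j | j | j)) h <;>
      simp only [labAux] at h <;>
      first
        | rfl
        | (exfalso; omega)
        | (have : i = j := by
             apply Fin.ext; omega
           rw [this])
  · rw [card_pos_aux, card_neg_aux]
    rintro ((⟨⟩ | ⟨⟩) | (i | i | i)) <;> simp only [labAux] <;> omega
  · rw [card_pos_aux]
    ext k
    simp only [doubleStarPos, Finset.mem_image, Finset.mem_union, Finset.mem_singleton,
      Finset.mem_univ, true_and, Finset.mem_Icc]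
    constructor
    · rintro ⟨e, (rfl | ⟨i, rfl⟩) | ⟨i, rfl⟩, rfl⟩ <;>
        simp only [posLabel, Sym2.lift_mk, z1, z2, vv, ww, labAux, Nat.dist] <;> omega
    · rintro ⟨h1, h2⟩
      rcases lt_trichotomy k (r + 1) with h | h | h
      · refine ⟨_, Or.inr ⟨⟨r - k, by omega⟩, rfl⟩, ?_⟩
        simp only [posLabel, Sym2.lift_mk, z2, ww, labAux, Nat.dist]
        omega
      · refine ⟨_, Or.inl (Or.inl rfl), ?_⟩
        simp only [posLabel, Sym2.lift_mk, z1, z2, labAux, Nat.dist]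
        omega
      · refine ⟨_, Or.inl (Or.inr ⟨⟨k - (r + 2), by omega⟩, rfl⟩), ?_⟩
        simp only [posLabel, Sym2.lift_mk, z1, vv, labAux, Nat.dist]
        omega
  · rw [card_neg_aux]
    simp [doubleStarPos, negLabel, z1, uu, labAux]
end

section
/- Let S be the signed double star consisting of a negative central edge z₁z₂, together with l ≥ 0 positive pendant edges z₁v₁,…,z₁v_l attached at z₁ and r ≥ 0 positive pendant edges z₂w₁,…,z₂w_r attached at z₂ (so S is a (l+r+2, l+r, 1) signed graph). Then S is additively graceful if and only if l = 0 or r = 0. -/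
/-- The signed double star with a *negative* central edge `z₁z₂`,
`a` positive and `b` negative pendant edges at `z₁`, and `c` positive pendant
edges at `z₂`. -/
def doubleStarNeg (a b c : ℕ) : SignedGraph (DSV a b c) where
  posEdges :=
    Finset.univ.image (fun i : Fin a => s(z1, vv i)) ∪
      Finset.univ.image (fun i : Fin c => s(z2, ww i))
  negEdges := {s(z1, z2)} ∪ Finset.univ.image (fun i : Fin b => s(z1, uu i))
  disjoint := by
    rw [Finset.disjoint_left]
    intro e he1 he2
    simp only [Finset.mem_union, Finset.mem_singleton, Finset.mem_image,
      Finset.mem_univ, true_and] at he1 he2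
    rcases he1 with ⟨i, rfl⟩ | ⟨i, rfl⟩ <;>
      rcases he2 with h | ⟨j, h⟩ <;>
      simp [z1, z2, vv, uu, ww, Sym2.eq_iff] at h
  pos_not_diag := by
    intro e he
    simp only [Finset.mem_union, Finset.mem_singleton, Finset.mem_image,
      Finset.mem_univ, true_and] at he
    rcases he with ⟨i, rfl⟩ | ⟨i, rfl⟩ <;>
      simp [z1, z2, vv, ww, Sym2.mk_isDiag_iff]
  neg_not_diag := by
    intro e he
    simp only [Finset.mem_union, Finset.mem_singleton, Finset.mem_image,
      Finset.mem_univ, true_and] at he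
    rcases he with rfl | ⟨i, rfl⟩ <;>
      simp [z1, z2, uu, Sym2.mk_isDiag_iff]

lemma dsn_pos_disj (l r : ℕ) :
    Disjoint (Finset.univ.image (fun i : Fin l => (s(z1, vv i) : Sym2 (DSV l 0 r))))
      (Finset.univ.image (fun i : Fin r => (s(z2, ww i) : Sym2 (DSV l 0 r)))) := by
  rw [Finset.disjoint_left]
  intro e h1 h2
  simp only [Finset.mem_image, Finset.mem_univ, true_and] at h1 h2
  obtain ⟨i, rfl⟩ := h1
  obtain ⟨j, h⟩ := h2
  simp [z1, z2, vv, ww, Sym2.eq_iff] at h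

lemma dsn_inj1 (l r : ℕ) :
    Function.Injective (fun i : Fin l => (s(z1, vv i) : Sym2 (DSV l 0 r))) := by
  intro i j h
  simpa [z1, z2, vv, ww, Sym2.eq_iff] using h

lemma dsn_inj2 (l r : ℕ) :
    Function.Injective (fun i : Fin r => (s(z2, ww i) : Sym2 (DSV l 0 r))) := by
  intro i j h
  simpa [z1, z2, vv, ww, Sym2.eq_iff] using h

lemma dsn_pos_card (l r : ℕ) : (doubleStarNeg l 0 r).posEdges.card = l + r := by
  simp only [doubleStarNeg]
  rw [Finset.card_union_of_disjoint (dsn_pos_disj l r),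
    Finset.card_image_of_injective _ (dsn_inj1 l r),
    Finset.card_image_of_injective _ (dsn_inj2 l r)]
  simp

lemma dsn_neg_edges (l r : ℕ) : (doubleStarNeg l 0 r).negEdges = {s(z1, z2)} := by
  simp [doubleStarNeg]

lemma dsn_pos_sum (l r : ℕ) (g : Sym2 (DSV l 0 r) → ℕ) :
    ∑ e ∈ (doubleStarNeg l 0 r).posEdges, g e =
      ∑ i : Fin l, g s(z1, vv i) + ∑ i : Fin r, g s(z2, ww i) := by
  simp only [doubleStarNeg]
  rw [Finset.sum_union (dsn_pos_disj l r), Finset.sum_image (dsn_inj1 l r).injOn,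
    Finset.sum_image (dsn_inj2 l r).injOn]

lemma dsn_forward (l r : ℕ) (f : DSV l 0 r → ℕ)
    (hf : IsAddGraceful (doubleStarNeg l 0 r) f) : l = 0 ∨ r = 0 := by
  obtain ⟨hinj, hb, hp, hn⟩ := hf
  rw [dsn_neg_edges] at hb hn
  rw [dsn_pos_card] at hb hp
  have hz : f z1 + f z2 = 1 := by
    have := Finset.ext_iff.1 hn 1
    simp [negLabel] at this
    omega
  have hlab : Set.InjOn (posLabel f) (doubleStarNeg l 0 r).posEdges := by
    rw [← Finset.card_image_iff, hp, dsn_pos_card]; simp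
  have hS : ∑ e ∈ (doubleStarNeg l 0 r).posEdges, posLabel f e
      = ∑ x ∈ Finset.Icc 1 (l + r), x := by
    rw [← hp, Finset.sum_image hlab]
  rw [dsn_pos_sum] at hS
  have himg : Finset.univ.image f = Finset.range (l + r + 2) := by
    apply Finset.eq_of_subset_of_card_le
    · intro x hx
      simp only [Finset.mem_image, Finset.mem_univ, true_and] at hx
      obtain ⟨v, rfl⟩ := hx
      have := hb v
      simp at this ⊢
      omega
    · rw [Finset.card_image_of_injective _ hinj]
      simp
      omega
  have hT : ∑ v, f v = ∑ x ∈ Finset.range (l + r + 2), x := by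
    rw [← himg, Finset.sum_image hinj.injOn]
  have hI : ∑ x ∈ Finset.range (l + r + 2), x
      = ∑ x ∈ Finset.Icc 1 (l + r), x + (l + r + 1) := by
    rw [Finset.sum_range_succ, Finset.range_eq_Ico, Finset.sum_eq_sum_Ico_succ_bot (by omega)]
    simp only [zero_add]
    rfl
  have hT' : ∑ v, f v = f z1 + f z2 + (∑ i : Fin l, f (vv i) + ∑ i : Fin r, f (ww i)) := by
    simp [Fintype.sum_sum_type, z1, z2, vv, ww]
  have ne1 : ∀ i, f (vv i) ≠ f z2 := fun i h => by
    have := hinj h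
    simp [vv, z2] at this
  have ne2 : ∀ i, f (vv i) ≠ f z1 := fun i h => by
    have := hinj h
    simp [vv, z1] at this
  have ne3 : ∀ i, f (ww i) ≠ f z2 := fun i h => by
    have := hinj h
    simp [ww, z2] at this
  have ne4 : ∀ i, f (ww i) ≠ f z1 := fun i h => by
    have := hinj h
    simp [ww, z1] at this
  have e1 : ∑ i : Fin l, f (vv i) = ∑ i : Fin l, posLabel f s(z1, vv i) + l * f z1 := by
    have : ∀ i : Fin l, f (vv i) = posLabel f s(z1, vv i) + f z1 := fun i => by
      have := ne1 i
      have := ne2 i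
      simp only [posLabel, Sym2.lift_mk, Nat.dist]
      omega
    rw [Finset.sum_congr rfl (fun i _ => this i), Finset.sum_add_distrib]
    simp
  have e2 : ∑ i : Fin r, f (ww i) = ∑ i : Fin r, posLabel f s(z2, ww i) + r * f z2 := by
    have : ∀ i : Fin r, f (ww i) = posLabel f s(z2, ww i) + f z2 := fun i => by
      have := ne3 i
      have := ne4 i
      simp only [posLabel, Sym2.lift_mk, Nat.dist]
      omega
    rw [Finset.sum_congr rfl (fun i _ => this i), Finset.sum_add_distrib]
    simp
  have hc : (f z1 = 0 ∧ f z2 = 1) ∨ (f z1 = 1 ∧ f z2 = 0) := by omega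
  rcases hc with ⟨h1, h2⟩ | ⟨h1, h2⟩ <;> rw [h1] at e1 <;> rw [h2] at e2 <;> omega

lemma dsn_backward (l r a b : ℕ) (hab : a + b = 1)
    (h : (l = 0 ∧ b = 1) ∨ (r = 0 ∧ a = 1)) :
    ∃ f : DSV l 0 r → ℕ, IsAddGraceful (doubleStarNeg l 0 r) f := by
  refine ⟨Sum.elim (Sum.elim (fun _ => a) (fun _ => b))
    (Sum.elim (fun i => i.val + 2) (Sum.elim (fun _ => 0) (fun i => i.val + 2))), ?_, ?_, ?_, ?_⟩
  · rintro ((x | x) | (x | x | x)) ((y | y) | (y | y | y)) hxy <;>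
      simp [Fin.ext_iff] at hxy ⊢ <;>
      first
        | omega
        | exact x.elim0
        | exact y.elim0
  · rw [dsn_pos_card, dsn_neg_edges]
    rintro ((x | x) | (x | x | x)) <;> simp <;> omega
  · rw [dsn_pos_card]
    ext x
    simp only [doubleStarNeg, Finset.mem_image, Finset.mem_union, Finset.mem_univ, true_and,
      Finset.mem_Icc]
    constructor
    · rintro ⟨e, ⟨i, rfl⟩ | ⟨i, rfl⟩, rfl⟩ <;>
        simp [posLabel, z1, z2, vv, ww, Nat.dist] <;> omega
    · intro hx
      rcases h with ⟨h1, h2⟩ | ⟨h1, h2⟩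
      · refine ⟨_, Or.inr ⟨⟨x - 1, by omega⟩, rfl⟩, ?_⟩
        simp [posLabel, z2, ww, Nat.dist]
        omega
      · refine ⟨_, Or.inl ⟨⟨x - 1, by omega⟩, rfl⟩, ?_⟩
        simp [posLabel, z1, vv, Nat.dist]
        omega
  · rw [dsn_neg_edges]
    simp [negLabel, z1, z2, hab]

/-- The signed double star with negative central edge `z₁z₂`,
`l` positive pendant edges at `z₁` and `r` positive pendant edges at `z₂`, is
additively graceful if and only if `l = 0` or `r = 0`. -/
theorem doubleStar_negCenter_addGraceful_iff (l r : ℕ) :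
    (∃ f : DSV l 0 r → ℕ, IsAddGraceful (doubleStarNeg l 0 r) f) ↔ l = 0 ∨ r = 0 := by
  constructor
  · rintro ⟨f, hf⟩
    exact dsn_forward l r f hf
  · rintro (h | h)
    · exact dsn_backward l r 0 1 rfl (Or.inl ⟨h, rfl⟩)
    · exact dsn_backward l r 1 0 rfl (Or.inr ⟨h, rfl⟩)
end

section
/- Let S(l,r) be the signed double star consisting of a positive central edge z₁z₂, together with l positive pendant edges z₁v₁,…,z₁v_l and two negative pendant edges z₁u₁, z₁u₂ attached at z₁, and r positive pendant edges z₂w₁,…,z₂w_r attached at z₂ (so S(l,r) is a (l+r+4, l+r+1, 2) signed graph). If r < 2, then S(l,r) is not additively graceful. -/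
/-- The signed double star with positive central edge `z₁z₂`,
`l` positive and `2` negative pendant edges at `z₁`, and `r` positive pendant
edges at `z₂`, is not additively graceful when `r < 2`. -/
theorem doubleStar_twoNeg_not_addGraceful_of_r_lt_two (l r : ℕ) (hr : r < 2) :
    ¬ ∃ f : DSV l 2 r → ℕ, IsAddGraceful (doubleStarPos l 2 r) f := by
  rintro ⟨f, hinj, -, hpos, hneg⟩
  have hcn : (doubleStarPos l 2 r).negEdges.card = 2 := by
    have : Function.Injective (fun i : Fin 2 => (s(z1, uu i) : Sym2 (DSV l 2 r))) := by
      intro i j h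
      simpa [z1, uu, Sym2.eq_iff] using h
    simp only [doubleStarPos]
    rw [Finset.card_image_of_injective _ this]
    simp
  rw [hcn] at hneg
  have hn : ∀ k, 1 ≤ k → k ≤ 2 → ∃ i : Fin 2, f z1 + f (uu i) = k := by
    intro k h1 h2
    have hk : k ∈ Finset.Icc 1 2 := Finset.mem_Icc.mpr ⟨h1, h2⟩
    rw [← hneg] at hk
    simpa [doubleStarPos, negLabel] using hk
  obtain ⟨i, hi⟩ := hn 1 le_rfl (by norm_num)
  obtain ⟨j, hj⟩ := hn 2 (by norm_num) le_rfl
  have hu : ∀ k : Fin 2, f z1 ≠ f (uu k) := fun k h => by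
    have := hinj h
    simp [z1, uu] at this
  have hui := hu i
  have huj := hu j
  have hz : f z1 = 0 := by omega
  have h1 : f (uu i) = 1 := by omega
  have h2 : f (uu j) = 2 := by omega
  -- any vertex other than z₁, uᵢ, uⱼ has label at least 3
  have big : ∀ x : DSV l 2 r, x ≠ z1 → x ≠ uu i → x ≠ uu j → 3 ≤ f x := by
    intro x hx hxi hxj
    have a := hinj.ne hx
    have b := hinj.ne hxi
    have c := hinj.ne hxj
    omega
  have hp : ∀ k, 1 ≤ k → k ≤ (doubleStarPos l 2 r).posEdges.card → k ≤ 2 →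
      ∃ t : Fin r, Nat.dist (f z2) (f (ww t)) = k := by
    intro k hk1 hk2 hk3
    have hk : k ∈ Finset.Icc 1 (doubleStarPos l 2 r).posEdges.card :=
      Finset.mem_Icc.mpr ⟨hk1, hk2⟩
    rw [← hpos] at hk
    obtain ⟨e, he, hek⟩ := Finset.mem_image.mp hk
    simp only [doubleStarPos, Finset.mem_union, Finset.mem_singleton, Finset.mem_image,
      Finset.mem_univ, true_and] at he
    rcases he with (rfl | ⟨t, rfl⟩) | ⟨t, rfl⟩
    · have := big z2 (by simp [z1, z2]) (by simp [z2, uu]) (by simp [z2, uu])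
      simp only [posLabel, Sym2.lift_mk, Nat.dist, hz] at hek
      omega
    · have := big (vv t) (by simp [z1, vv]) (by simp [vv, uu]) (by simp [vv, uu])
      simp only [posLabel, Sym2.lift_mk, Nat.dist, hz] at hek
      omega
    · exact ⟨t, by simpa [posLabel] using hek⟩
  have hz12 : s(z1, z2) ∈ (doubleStarPos l 2 r).posEdges := by simp [doubleStarPos]
  obtain ⟨t, ht⟩ := hp 1 le_rfl (Finset.card_pos.mpr ⟨_, hz12⟩) (by norm_num)
  have hw : s(z2, ww t) ∈ (doubleStarPos l 2 r).posEdges :=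
    Finset.mem_union_right _ (Finset.mem_image_of_mem _ (Finset.mem_univ t))
  have hlt : 1 < (doubleStarPos l 2 r).posEdges.card :=
    Finset.one_lt_card.mpr ⟨_, hz12, _, hw, by simp [z1, z2, ww, Sym2.eq_iff]⟩
  obtain ⟨t', ht'⟩ := hp 2 (by norm_num) hlt le_rfl
  have htt : t = t' := Fin.ext (by omega)
  subst htt
  omega
end

section
/- Let S(l,r) be the signed double star consisting of a positive central edge z₁z₂, together with l positive pendant edges z₁v₁,…,z₁v_l and two negative pendant edges z₁u₁, z₁u₂ attached at z₁, and r positive pendant edges z₂w₁,…,z₂w_r attached at z₂ (so S(l,r) is a (l+r+4, l+r+1, 2) signed graph). If l = r − 2 (with r ≥ 2), then S(l,r) is additively graceful. -/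
/-- The labeling: `z₁ ↦ 0`, `z₂ ↦ l+3`, `vᵢ ↦ l+4+i`, `uᵢ ↦ i+1`, and the `wᵢ` take
the values `3, …, l+2, 2l+4, 2l+5`. -/
def dsLab (l r : ℕ) : DSV l 2 r → ℕ
  | Sum.inl (Sum.inl _) => 0
  | Sum.inl (Sum.inr _) => l + 3
  | Sum.inr (Sum.inl i) => l + 4 + i
  | Sum.inr (Sum.inr (Sum.inl i)) => i + 1
  | Sum.inr (Sum.inr (Sum.inr i)) => if (i : ℕ) < l then i + 3 else i + l + 4

/-- The signed double star with positive central edge `z₁z₂`,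
`l` positive and `2` negative pendant edges at `z₁`, and `r` positive pendant
edges at `z₂`, is additively graceful when `l = r - 2` (with `r ≥ 2`). -/
theorem doubleStar_twoNeg_addGraceful_of_l_eq_r_sub_two (l r : ℕ) (hr : 2 ≤ r)
    (hlr : l + 2 = r) :
    ∃ f : DSV l 2 r → ℕ, IsAddGraceful (doubleStarPos l 2 r) f := by
  subst hlr
  have hneg : (doubleStarPos l 2 (l + 2)).negEdges.image (negLabel (dsLab l (l + 2)))
      = Finset.Icc 1 2 := by
    ext x
    simp only [doubleStarPos, Finset.mem_image, Finset.mem_univ, true_and,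
      exists_exists_eq_and, negLabel, Sym2.lift_mk, z1, uu, dsLab, Finset.mem_Icc]
    constructor
    · rintro ⟨i, rfl⟩
      omega
    · intro h
      exact ⟨⟨x - 1, by omega⟩, by simp; omega⟩
  have hpos : (doubleStarPos l 2 (l + 2)).posEdges.image (posLabel (dsLab l (l + 2)))
      = Finset.Icc 1 (2 * l + 3) := by
    ext x
    simp only [doubleStarPos, Finset.image_union, Finset.mem_union, Finset.image_singleton,
      Finset.mem_singleton, Finset.mem_image, Finset.mem_univ, true_and,
      exists_exists_eq_and, posLabel, Sym2.lift_mk, z1, z2, vv, ww, dsLab, Finset.mem_Icc,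
      Nat.dist]
    constructor
    · rintro ((rfl | ⟨i, rfl⟩) | ⟨i, rfl⟩)
      · omega
      · omega
      · split_ifs <;> omega
    · intro h
      by_cases h1 : x = l + 3
      · left; left; omega
      by_cases h2 : l + 3 < x
      · left; right
        exact ⟨⟨x - (l + 4), by omega⟩, by simp only []; omega⟩
      right
      by_cases h3 : x ≤ l
      · refine ⟨⟨l - x, by omega⟩, ?_⟩
        simp only []
        rw [if_pos (by omega)]; omega
      · refine ⟨⟨x - 1, by omega⟩, ?_⟩
        simp only []
        rw [if_neg (by omega)]; omega
  have cneg : (doubleStarPos l 2 (l + 2)).negEdges.card = 2 := by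
    apply le_antisymm
    · exact Finset.card_image_le.trans (by simp)
    · have := Finset.card_image_le (s := (doubleStarPos l 2 (l + 2)).negEdges)
        (f := negLabel (dsLab l (l + 2)))
      rw [hneg] at this
      simpa using this
  have cpos : (doubleStarPos l 2 (l + 2)).posEdges.card = 2 * l + 3 := by
    apply le_antisymm
    · have h1 : (Finset.univ.image
          (fun i : Fin l => (s(z1, vv i) : Sym2 (DSV l 2 (l + 2))))).card ≤ l :=
        Finset.card_image_le.trans (by simp)
      have h2 : (Finset.univ.image
          (fun i : Fin (l + 2) => (s(z2, ww i) : Sym2 (DSV l 2 (l + 2))))).card ≤ l + 2 :=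
        Finset.card_image_le.trans (by simp)
      refine (Finset.card_union_le _ _).trans ?_
      refine (Nat.add_le_add (Finset.card_union_le _ _) h2).trans ?_
      rw [Finset.card_singleton]
      omega
    · have := Finset.card_image_le (s := (doubleStarPos l 2 (l + 2)).posEdges)
        (f := posLabel (dsLab l (l + 2)))
      rw [hpos] at this
      simpa using this
  refine ⟨dsLab l (l + 2), ?_, ?_, ?_, ?_⟩
  · rintro ((⟨⟩ | ⟨⟩) | (i | i | i)) ((⟨⟩ | ⟨⟩) | (j | j | j)) h <;>
      simp only [dsLab] at h <;> (try split_ifs at h) <;>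
      first
      | rfl
      | (exfalso; omega)
      | (have hij : i = j := Fin.ext (by omega)
         rw [hij])
  · rw [cpos, cneg]
    rintro ((⟨⟩ | ⟨⟩) | (i | i | i)) <;> simp only [dsLab] <;> (try split_ifs) <;> omega
  · rw [cpos, hpos]
  · rw [cneg, hneg]
end

section
/- Let S(l,3) be the signed double star consisting of a positive central edge z₁z₂, together with l positive pendant edges z₁v₁,…,z₁v_l and two negative pendant edges z₁u₁, z₁u₂ attached at z₁, and 3 positive pendant edges z₂w₁, z₂w₂, z₂w₃ attached at z₂ (so S(l,3) is a (l+7, l+4, 2) signed graph). If l is odd and l ≥ 3, then S(l,3) is not additively graceful. -/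
theorem ds_neg_card (a b c : ℕ) : (doubleStarPos a b c).negEdges.card = b := by
  simp only [doubleStarPos]
  rw [Finset.card_image_of_injective]
  · simp
  · intro i j h
    simpa [z1, uu, Sym2.eq_iff] using h

theorem ds_pos_card (a b c : ℕ) : (doubleStarPos a b c).posEdges.card = a + c + 1 := by
  simp only [doubleStarPos]
  rw [Finset.card_union_of_disjoint, Finset.card_union_of_disjoint,
    Finset.card_image_of_injective, Finset.card_image_of_injective]
  · simp; omega
  · intro i j h
    simpa [z2, ww, Sym2.eq_iff] using h
  · intro i j h
    simpa [z1, vv, Sym2.eq_iff] using h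
  · simp [z1, z2, vv, Sym2.eq_iff]
  · rw [Finset.disjoint_left]
    intro e he1 he2
    simp only [Finset.mem_union, Finset.mem_singleton, Finset.mem_image,
      Finset.mem_univ, true_and] at he1 he2
    obtain ⟨j, rfl⟩ := he2
    rcases he1 with h | ⟨i, h⟩ <;>
      simp [z1, z2, vv, ww, Sym2.eq_iff] at h

theorem doubleStar_twoNeg_r3_not_addGraceful_of_odd (l : ℕ) (hodd : Odd l) (hl : 3 ≤ l) :
    ¬ ∃ f : DSV l 2 3 → ℕ, IsAddGraceful (doubleStarPos l 2 3) f := by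
  rintro ⟨f, hinj, hle, hpos, hneg⟩
  rw [ds_pos_card, ds_neg_card] at hle
  rw [ds_pos_card] at hpos
  rw [ds_neg_card] at hneg
  have hneg' : ∀ k, (∃ i : Fin 2, f z1 + f (uu i) = k) ↔ 1 ≤ k ∧ k ≤ 2 := by
    intro k
    rw [← Finset.mem_Icc, ← hneg]
    simp [doubleStarPos, negLabel]
  have hpos' : ∀ k, (Nat.dist (f z1) (f z2) = k ∨ (∃ i : Fin l, Nat.dist (f z1) (f (vv i)) = k)
      ∨ (∃ i : Fin 3, Nat.dist (f z2) (f (ww i)) = k)) ↔ 1 ≤ k ∧ k ≤ l + 3 + 1 := by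
    intro k
    rw [← Finset.mem_Icc, ← hpos]
    simp only [doubleStarPos, Finset.mem_image, Finset.mem_union, Finset.mem_singleton,
      Finset.mem_univ, true_and]
    constructor
    · rintro (h | ⟨i, h⟩ | ⟨i, h⟩)
      · exact ⟨_, Or.inl (Or.inl rfl), h⟩
      · exact ⟨_, Or.inl (Or.inr ⟨i, rfl⟩), h⟩
      · exact ⟨_, Or.inr ⟨i, rfl⟩, h⟩
    · rintro ⟨e, (rfl | ⟨i, rfl⟩) | ⟨i, rfl⟩, h⟩
      · exact Or.inl h
      · exact Or.inr (Or.inl ⟨i, h⟩)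
      · exact Or.inr (Or.inr ⟨i, h⟩)
  -- the labels are a bijection onto `0, …, l + 6`
  have hsurj : ∀ k, k ≤ l + 6 → ∃ v, f v = k := by
    intro k hk
    have himg : Finset.univ.image f = Finset.range (l + 7) := by
      apply Finset.eq_of_subset_of_card_le
      · intro x hx
        simp only [Finset.mem_image, Finset.mem_univ, true_and] at hx
        obtain ⟨v, rfl⟩ := hx
        have := hle v
        simp only [Finset.mem_range]
        omega
      · rw [Finset.card_image_of_injective _ hinj]
        simp
        omega
    have : k ∈ Finset.univ.image f := by
      rw [himg]; simp only [Finset.mem_range]; omega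
    simpa only [Finset.mem_image, Finset.mem_univ, true_and] using this
  have n1u : ∀ i, f z1 ≠ f (uu i) := fun i h => by simpa [z1, uu] using hinj h
  have n2u : ∀ i, f z2 ≠ f (uu i) := fun i h => by simpa [z2, uu] using hinj h
  have nvu : ∀ i j, f (vv i) ≠ f (uu j) := fun i j h => by simpa [vv, uu] using hinj h
  have nwu : ∀ i j, f (ww i) ≠ f (uu j) := fun i j h => by simpa [ww, uu] using hinj h
  have n2w : ∀ i, f z2 ≠ f (ww i) := fun i h => by simpa [z2, ww] using hinj h
  have n1w : ∀ i, f z1 ≠ f (ww i) := fun i h => by simpa [z1, ww] using hinj h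
  have n12 : f z1 ≠ f z2 := fun h => by simpa [z1, z2] using hinj h
  have nvw : ∀ i j, f (vv i) ≠ f (ww j) := fun i j h => by simpa [vv, ww] using hinj h
  have nww : ∀ i j, f (ww i) = f (ww j) → i = j := fun i j h => by simpa [ww] using hinj h
  obtain ⟨a, ha⟩ := (hneg' 1).2 (by omega)
  obtain ⟨b, hb⟩ := (hneg' 2).2 (by omega)
  have hna := n1u a
  have hnb := n1u b
  have h0 : f z1 = 0 := by omega
  have hd : ∀ x, Nat.dist (f z1) x = x := by intro x; simp [h0, Nat.dist]
  simp only [hd] at hpos'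
  have hc := (hpos' (f z2)).1 (Or.inl rfl)
  have hc1 := n2u a
  have hc2 := n2u b
  have hlow : ∀ i, 3 ≤ f (ww i) ∧ f (ww i) ≤ l + 6 := by
    intro i
    have h1 := nwu i a
    have h2 := nwu i b
    have h3 := n1w i
    have h4 := hle (ww i)
    omega
  have hhigh : ∀ k, l + 5 ≤ k → k ≤ l + 6 → ∃ i, f (ww i) = k := by
    intro k h1 h2
    obtain ⟨v, hv⟩ := hsurj k h2
    rcases v with (u | u) | (i | i | i)
    · change f z1 = k at hv
      omega
    · change f z2 = k at hv
      omega
    · change f (vv i) = k at hv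
      have := (hpos' (f (vv i))).1 (Or.inr (Or.inl ⟨i, rfl⟩))
      omega
    · change f (uu i) = k at hv
      have := (hneg' (f z1 + f (uu i))).1 ⟨i, rfl⟩
      omega
    · exact ⟨i, hv⟩
  -- labels `1`, `2` and the low `f (ww k)` must be realised at `z2`
  have hw : ∀ k, 1 ≤ k → k ≤ l + 4 → (k ≤ 2 ∨ ∃ j, f (ww j) = k) →
      ∃ i, Nat.dist (f z2) (f (ww i)) = k := by
    intro k h1 h2 h3
    rcases (hpos' k).2 ⟨h1, h2⟩ with h | ⟨i, h⟩ | h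
    · rcases h3 with h3 | ⟨j, h3⟩
      · omega
      · exact absurd (h.trans h3.symm) (n2w j)
    · rcases h3 with h3 | ⟨j, h3⟩
      · have e1 := nvu i a
        have e2 := nvu i b
        omega
      · exact absurd (h.trans h3.symm) (nvw i j)
    · exact h
  have third : ∀ p q : Fin 3, p ≠ q →
      ∃ r : Fin 3, r ≠ p ∧ r ≠ q ∧ ∀ i, i = p ∨ i = q ∨ i = r := by decide
  obtain ⟨p, hp⟩ := hhigh (l + 5) (by omega) (by omega)
  obtain ⟨q, hq⟩ := hhigh (l + 6) (by omega) (by omega)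
  have hpq : p ≠ q := by rintro rfl; omega
  obtain ⟨r, hrp, hrq, hall⟩ : ∃ r : Fin 3, r ≠ p ∧ r ≠ q ∧ ∀ i, i = p ∨ i = q ∨ i = r := by
    exact third p q hpq
  have hr1 : f (ww r) ≠ l + 5 := fun h => hrp (nww _ _ (h.trans hp.symm))
  have hr2 : f (ww r) ≠ l + 6 := fun h => hrq (nww _ _ (h.trans hq.symm))
  have hr := hlow r
  have key : ∀ k, (∃ i, Nat.dist (f z2) (f (ww i)) = k) →
      (l + 5 - f z2 = k ∨ l + 6 - f z2 = k ∨
        (f z2 - f (ww r)) + (f (ww r) - f z2) = k) := by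
    rintro k ⟨i, hi⟩
    rcases hall i with rfl | rfl | rfl <;> simp only [Nat.dist] at hi <;> omega
  have k1 := key 1 (hw 1 (by omega) (by omega) (by omega))
  have k2 := key 2 (hw 2 (by omega) (by omega) (by omega))
  have k3 := key (f (ww r)) (hw _ (by omega) (by omega) (Or.inr ⟨r, rfl⟩))
  obtain ⟨t, ht⟩ := hodd
  omega
end

section
/- Let S(l,2) be the signed double star consisting of a positive central edge z₁z₂, together with l ≥ 0 positive pendant edges z₁v₁,…,z₁v_l and two negative pendant edges z₁u₁, z₁u₂ attached at z₁, and 2 positive pendant edges z₂w₁, z₂w₂ attached at z₂ (so S(l,2) is a (l+6, l+3, 2) signed graph). Then for every l ≥ 0, S(l,2) is additively graceful. -/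
/-- The signed double star with positive central edge `z₁z₂`,
`l ≥ 0` positive and `2` negative pendant edges at `z₁`, and `2` positive
pendant edges at `z₂`, is additively graceful for every `l`. -/
theorem doubleStar_twoNeg_r2_addGraceful (l : ℕ) :
    ∃ f : DSV l 2 2 → ℕ, IsAddGraceful (doubleStarPos l 2 2) f := by
  have hneg : (doubleStarPos l 2 2).negEdges.card = 2 := by
    show (Finset.univ.image (fun i : Fin 2 => s(z1, uu i))).card = 2
    rw [Finset.card_image_of_injective]
    · simp
    · intro i j h
      simpa [z1, uu, Sym2.eq_iff] using h
  have hpos : (doubleStarPos l 2 2).posEdges.card = l + 3 := by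
    show ({s(z1, z2)} ∪ Finset.univ.image (fun i : Fin l => s(z1, vv i)) ∪
      Finset.univ.image (fun i : Fin 2 => s(z2, ww i)) : Finset (Sym2 (DSV l 2 2))).card = l + 3
    rw [Finset.card_union_of_disjoint, Finset.card_union_of_disjoint,
      Finset.card_image_of_injective, Finset.card_image_of_injective]
    · simp
      omega
    · intro i j h
      simpa [z2, ww, Sym2.eq_iff] using h
    · intro i j h
      simpa [z1, vv, Sym2.eq_iff] using h
    · simp [z1, z2, vv, Sym2.eq_iff]
    · rw [Finset.disjoint_left]
      intro e he1 he2
      simp only [Finset.mem_union, Finset.mem_singleton, Finset.mem_image,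
        Finset.mem_univ, true_and] at he1 he2
      obtain ⟨j, rfl⟩ := he2
      rcases he1 with h | ⟨i, h⟩ <;> simp [z1, z2, vv, ww, Sym2.eq_iff] at h
  let f : DSV l 2 2 → ℕ := fun x => match x with
    | Sum.inl (Sum.inl _) => 0
    | Sum.inl (Sum.inr _) => l + 3
    | Sum.inr (Sum.inl i) => i.val + 3
    | Sum.inr (Sum.inr (Sum.inl i)) => i.val + 1
    | Sum.inr (Sum.inr (Sum.inr i)) => l + 4 + i.val
  refine ⟨f, ?_, ?_, ?_, ?_⟩
  · rintro ((_ | _) | (i | i | i)) ((_ | _) | (j | j | j)) h <;>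
      simp only [f] at h <;> first
        | rfl
        | (exfalso; omega)
        | (have : i = j := Fin.ext (by omega)
           rw [this])
  · rw [hneg, hpos]
    rintro ((_ | _) | (i | i | i)) <;> simp only [f] <;> omega
  · rw [hpos]
    ext k
    simp only [doubleStarPos, Finset.mem_image, Finset.mem_union, Finset.mem_singleton,
      Finset.mem_univ, true_and, Finset.mem_Icc]
    constructor
    · rintro ⟨e, (rfl | ⟨i, rfl⟩) | ⟨i, rfl⟩, rfl⟩ <;>
        simp only [posLabel, Sym2.lift_mk, f, z1, z2, vv, ww, Nat.dist] <;> omega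
    · rintro ⟨h1, h2⟩
      by_cases hk : k ≤ 2
      · refine ⟨_, Or.inr ⟨⟨k - 1, by omega⟩, rfl⟩, ?_⟩
        simp only [posLabel, Sym2.lift_mk, f, z2, ww, Nat.dist]
        omega
      · by_cases hk2 : k = l + 3
        · refine ⟨_, Or.inl (Or.inl rfl), ?_⟩
          simp only [posLabel, Sym2.lift_mk, f, z1, z2, Nat.dist]
          omega
        · refine ⟨_, Or.inl (Or.inr ⟨⟨k - 3, by omega⟩, rfl⟩), ?_⟩
          simp only [posLabel, Sym2.lift_mk, f, z1, vv, Nat.dist]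
          omega
  · rw [hneg]
    ext k
    simp only [doubleStarPos, Finset.mem_image, Finset.mem_univ, true_and, Finset.mem_Icc]
    constructor
    · rintro ⟨e, ⟨i, rfl⟩, rfl⟩
      simp only [negLabel, Sym2.lift_mk, f, z1, uu]
      omega
    · rintro ⟨h1, h2⟩
      refine ⟨_, ⟨⟨k - 1, by omega⟩, rfl⟩, ?_⟩
      simp only [negLabel, Sym2.lift_mk, f, z1, uu]
      omega
end

section
/- Let S(l,2) be the signed double star consisting of a positive central edge z₁z₂, together with l ≥ 0 positive pendant edges z₁v₁,…,z₁v_l and two negative pendant edges z₁u₁, z₁u₂ attached at z₁, and 2 positive pendant edges z₂w₁, z₂w₂ attached at z₂. Then every additively graceful labeling g of S(l,2) satisfies g(z₁)=0, {g(u₁),g(u₂)}={1,2}, {g(v₁),…,g(v_l)}={3,4,…,l+2}, g(z₂)=l+3, and {g(w₁),g(w₂)}={l+4,l+5}; that is, the additively graceful labeling of S(l,2) is unique up to permutation of labels among the u's, among the v's, and among the w's. -/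
lemma dsp_pos_card (l : ℕ) : (doubleStarPos l 2 2).posEdges.card = l + 3 := by
  have h1 : Function.Injective (fun i : Fin l => (s(z1, vv i) : Sym2 (DSV l 2 2))) := by
    intro i j h
    simpa [z1, vv, Sym2.eq_iff] using h
  have h2 : Function.Injective (fun i : Fin 2 => (s(z2, ww i) : Sym2 (DSV l 2 2))) := by
    intro i j h
    simpa [z2, ww, Sym2.eq_iff] using h
  unfold doubleStarPos
  simp only
  rw [Finset.card_union_of_disjoint, Finset.card_union_of_disjoint,
    Finset.card_image_of_injective _ h1, Finset.card_image_of_injective _ h2]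
  · simp; omega
  · simp [z1, z2, vv, Sym2.eq_iff]
  · rw [Finset.disjoint_left]
    intro e he1 he2
    simp only [Finset.mem_union, Finset.mem_singleton, Finset.mem_image,
      Finset.mem_univ, true_and] at he1 he2
    obtain ⟨j, rfl⟩ := he2
    rcases he1 with h | ⟨i, h⟩ <;> simp [z1, z2, vv, ww, Sym2.eq_iff] at h

lemma dsp_neg_card (l : ℕ) : (doubleStarPos l 2 2).negEdges.card = 2 := by
  have h1 : Function.Injective (fun i : Fin 2 => (s(z1, uu i) : Sym2 (DSV l 2 2))) := by
    intro i j h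
    simpa [z1, uu, Sym2.eq_iff] using h
  unfold doubleStarPos
  simp only
  rw [Finset.card_image_of_injective _ h1]
  simp

/-- Every additively graceful labeling `g` of the signed
double star with positive central edge `z₁z₂`, `l` positive and `2` negative
pendant edges at `z₁`, and `2` positive pendant edges at `z₂`, satisfies
`g z₁ = 0`, `{g u₁, g u₂} = {1, 2}`, `{g v₁, …, g v_l} = {3, …, l+2}`,
`g z₂ = l + 3` and `{g w₁, g w₂} = {l+4, l+5}`; i.e. the labeling is unique up
to permutations among the `u`'s, the `v`'s and the `w`'s. -/
theorem doubleStar_twoNeg_r2_unique (l : ℕ) (g : DSV l 2 2 → ℕ)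
    (hg : IsAddGraceful (doubleStarPos l 2 2) g) :
    g z1 = 0 ∧ ({g (uu 0), g (uu 1)} : Finset ℕ) = {1, 2} ∧
      Finset.univ.image (fun i : Fin l => g (vv i)) = Finset.Icc 3 (l + 2) ∧
      g z2 = l + 3 ∧ ({g (ww 0), g (ww 1)} : Finset ℕ) = {l + 4, l + 5} := by
  obtain ⟨hinj, hle, hpos, hneg⟩ := hg
  rw [dsp_pos_card, dsp_neg_card] at hle
  rw [dsp_pos_card] at hpos
  rw [dsp_neg_card] at hneg
  -- every label is used
  have himg : Finset.univ.image g = Finset.range (l + 6) := by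
    apply Finset.eq_of_subset_of_card_le
    · intro x hx
      simp only [Finset.mem_image, Finset.mem_univ, true_and] at hx
      obtain ⟨v, rfl⟩ := hx
      have := hle v
      simp only [Finset.mem_range]
      omega
    · rw [Finset.card_image_of_injective _ hinj]
      simp [DSV]
      omega
  have hsurj : ∀ x, x < l + 6 → x = g z1 ∨ x = g z2 ∨ (∃ i, x = g (vv i)) ∨ x = g (uu 0) ∨
      x = g (uu 1) ∨ x = g (ww 0) ∨ x = g (ww 1) := by
    intro x hx
    rw [← Finset.mem_range, ← himg] at hx
    simp only [Finset.mem_image, Finset.mem_univ, true_and] at hx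
    obtain ⟨v, rfl⟩ := hx
    rcases v with (⟨⟩ | ⟨⟩) | i | i | i
    · exact Or.inl rfl
    · exact Or.inr (Or.inl rfl)
    · exact Or.inr (Or.inr (Or.inl ⟨i, rfl⟩))
    · fin_cases i
      · exact Or.inr (Or.inr (Or.inr (Or.inl rfl)))
      · exact Or.inr (Or.inr (Or.inr (Or.inr (Or.inl rfl))))
    · fin_cases i
      · exact Or.inr (Or.inr (Or.inr (Or.inr (Or.inr (Or.inl rfl)))))
      · exact Or.inr (Or.inr (Or.inr (Or.inr (Or.inr (Or.inr rfl)))))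
  have hne : ∀ a b : DSV l 2 2, a ≠ b → g a ≠ g b := fun a b h => hinj.ne h
  have n1 : ∀ y, (y = g z1 + g (uu 0) ∨ y = g z1 + g (uu 1)) ↔ (1 ≤ y ∧ y ≤ 2) := by
    intro y
    rw [← Finset.mem_Icc, ← hneg]
    simp [doubleStarPos, negLabel, eq_comm]
  have p1 : ∀ y, (y = Nat.dist (g z1) (g z2) ∨ (∃ i, y = Nat.dist (g z1) (g (vv i))) ∨
      y = Nat.dist (g z2) (g (ww 0)) ∨ y = Nat.dist (g z2) (g (ww 1))) ↔
      (1 ≤ y ∧ y ≤ l + 3) := by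
    intro y
    rw [← Finset.mem_Icc, ← hpos]
    simp [doubleStarPos, posLabel, Finset.image_union, Finset.image_image, eq_comm]
  have a1 := hne z1 (uu 0) (by simp [z1, uu])
  have a2 := hne z1 (uu 1) (by simp [z1, uu])
  have a3 := hne (uu 0) (uu 1) (by simp [uu])
  have b1 := (n1 1).2 (by omega)
  have b2 := (n1 2).2 (by omega)
  have hz : g z1 = 0 := by omega
  have hu : (g (uu 0) = 1 ∧ g (uu 1) = 2) ∨ (g (uu 0) = 2 ∧ g (uu 1) = 1) := by omega
  have hv3 : ∀ i, 3 ≤ g (vv i) ∧ g (vv i) ≤ l + 3 := by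
    intro i
    have c1 := hne (vv i) z1 (by simp [z1, vv])
    have c2 := hne (vv i) (uu 0) (by simp [uu, vv])
    have c3 := hne (vv i) (uu 1) (by simp [uu, vv])
    have c4 := (p1 _).1 (Or.inr (Or.inl ⟨i, rfl⟩))
    simp only [Nat.dist] at c4
    omega
  have hz2 : 3 ≤ g z2 ∧ g z2 ≤ l + 3 := by
    have c1 := hne z2 z1 (by simp [z1, z2])
    have c2 := hne z2 (uu 0) (by simp [uu, z2])
    have c3 := hne z2 (uu 1) (by simp [uu, z2])
    have c4 := (p1 _).1 (Or.inl rfl)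
    simp only [Nat.dist] at c4
    omega
  have hw : (g (ww 0) = l + 4 ∧ g (ww 1) = l + 5) ∨ (g (ww 0) = l + 5 ∧ g (ww 1) = l + 4) := by
    have d1 : l + 4 = g (ww 0) ∨ l + 4 = g (ww 1) := by
      rcases hsurj (l + 4) (by omega) with h | h | ⟨i, h⟩ | h
      · omega
      · omega
      · have := hv3 i
        omega
      · omega
    have d2 : l + 5 = g (ww 0) ∨ l + 5 = g (ww 1) := by
      rcases hsurj (l + 5) (by omega) with h | h | ⟨i, h⟩ | h
      · omega
      · omega
      · have := hv3 i
        omega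
      · omega
    omega
  have hz2' : g z2 = l + 3 := by
    rcases (p1 1).2 (by omega) with h | ⟨i, h⟩ | h
    · simp only [Nat.dist] at h
      omega
    · have := hv3 i
      simp only [Nat.dist] at h
      omega
    · simp only [Nat.dist] at h
      omega
  refine ⟨hz, ?_, ?_, hz2', ?_⟩
  · rcases hu with ⟨h, h'⟩ | ⟨h, h'⟩ <;> rw [h, h']
    exact Finset.pair_comm _ _
  · ext x
    simp only [Finset.mem_image, Finset.mem_univ, true_and, Finset.mem_Icc]
    constructor
    · rintro ⟨i, rfl⟩
      have c1 := hne (vv i) z2 (by simp [z2, vv])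
      have := hv3 i
      omega
    · intro hx
      rcases hsurj x (by omega) with h | h | ⟨i, h⟩ | h
      · omega
      · omega
      · exact ⟨i, h.symm⟩
      · omega
  · rcases hw with ⟨h, h'⟩ | ⟨h, h'⟩ <;> rw [h, h']
    exact Finset.pair_comm _ _
end

section
/- Let S(1,r) be the signed double star consisting of a positive central edge z₁z₂, together with 1 positive pendant edge z₁v₁ and two negative pendant edges z₁u₁, z₁u₂ attached at z₁, and r positive pendant edges z₂w₁,…,z₂w_r attached at z₂ (so S(1,r) is a (r+5, r+2, 2) signed graph). If r ≥ 5, then S(1,r) is not additively graceful. -/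
/-- The signed double star with positive central edge `z₁z₂`,
`1` positive and `2` negative pendant edges at `z₁`, and `r` positive pendant
edges at `z₂`, is not additively graceful when `r ≥ 5`. -/
theorem doubleStar_twoNeg_l1_not_addGraceful (r : ℕ) (hr : 5 ≤ r) :
    ¬ ∃ f : DSV 1 2 r → ℕ, IsAddGraceful (doubleStarPos 1 2 r) f := by
  rintro ⟨f, hinj, hle, hpos, hneg⟩
  have hcn : (doubleStarPos 1 2 r).negEdges.card = 2 := by
    simp only [doubleStarPos]
    rw [Finset.card_image_of_injective]
    · simp
    · intro i j h
      simpa [z1, uu, Sym2.eq_iff] using h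
  have hcp : (doubleStarPos 1 2 r).posEdges.card = r + 2 := by
    simp only [doubleStarPos]
    rw [Finset.card_union_of_disjoint, Finset.card_union_of_disjoint,
      Finset.card_image_of_injective, Finset.card_image_of_injective]
    · simp; omega
    · intro i j h
      simpa [z2, ww, Sym2.eq_iff] using h
    · intro i j h
      simpa [z1, vv, Sym2.eq_iff] using h
    · rw [Finset.disjoint_left]
      intro e h1 h2
      simp only [Finset.mem_singleton, Finset.mem_image, Finset.mem_univ, true_and] at h1 h2
      subst h1
      obtain ⟨i, h⟩ := h2
      simp [z1, z2, vv, Sym2.eq_iff] at h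
    · rw [Finset.disjoint_left]
      intro e h1 h2
      simp only [Finset.mem_union, Finset.mem_singleton, Finset.mem_image, Finset.mem_univ,
        true_and] at h1 h2
      obtain ⟨j, rfl⟩ := h2
      rcases h1 with h | ⟨i, h⟩ <;> simp [z1, z2, vv, ww, Sym2.eq_iff] at h
  rw [hcn] at hneg
  rw [hcp] at hpos
  rw [hcp, hcn] at hle
  have hn : ∀ k, (∃ i : Fin 2, f z1 + f (uu i) = k) ↔ 1 ≤ k ∧ k ≤ 2 := by
    intro k
    have h := Finset.ext_iff.1 hneg k
    simpa [doubleStarPos, negLabel] using h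
  have hp : ∀ k, ((k = Nat.dist (f z1) (f z2) ∨ k = Nat.dist (f z1) (f (vv 0))) ∨
      ∃ i : Fin r, Nat.dist (f z2) (f (ww i)) = k) ↔ 1 ≤ k ∧ k ≤ r + 2 := by
    intro k
    have h := Finset.ext_iff.1 hpos k
    rw [Finset.mem_Icc] at h
    rw [← h]
    simp only [doubleStarPos, Finset.mem_image, Finset.mem_union, Finset.mem_singleton,
      Finset.mem_univ, true_and]
    constructor
    · rintro ((h | h) | ⟨i, h⟩)
      · exact ⟨_, Or.inl (Or.inl rfl), h.symm⟩
      · exact ⟨_, Or.inl (Or.inr ⟨0, rfl⟩), h.symm⟩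
      · exact ⟨_, Or.inr ⟨i, rfl⟩, h⟩
    · rintro ⟨e, (rfl | ⟨i, rfl⟩) | ⟨i, rfl⟩, h⟩
      · exact Or.inl (Or.inl h.symm)
      · rw [Subsingleton.elim i 0] at h
        exact Or.inl (Or.inr h.symm)
      · exact Or.inr ⟨i, h⟩
  obtain ⟨i1, h1⟩ := (hn 1).2 (by omega)
  obtain ⟨i2, h2⟩ := (hn 2).2 (by omega)
  have e1 : f z1 ≠ f (uu i1) := fun h => by simpa [z1, uu] using hinj h
  have e2 : f z1 ≠ f (uu i2) := fun h => by simpa [z1, uu] using hinj h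
  have hz : f z1 = 0 := by omega
  have a0 : f z2 ≠ f z1 := fun h => by simpa [z1, z2] using hinj h
  have a1 : f z2 ≠ f (uu i1) := fun h => by simpa [z2, uu] using hinj h
  have a2 : f z2 ≠ f (uu i2) := fun h => by simpa [z2, uu] using hinj h
  have b0 : f (vv 0) ≠ f z1 := fun h => by simpa [z1, vv] using hinj h
  have b1 : f (vv 0) ≠ f (uu i1) := fun h => by simpa [vv, uu] using hinj h
  have b2 : f (vv 0) ≠ f (uu i2) := fun h => by simpa [vv, uu] using hinj h
  have w0 : ∀ i, f (ww i) ≠ f z1 := fun i h => by simpa [z1, ww] using hinj h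
  have w1 : ∀ i, f (ww i) ≠ f (uu i1) := fun i h => by simpa [ww, uu] using hinj h
  have w2 : ∀ i, f (ww i) ≠ f (uu i2) := fun i h => by simpa [ww, uu] using hinj h
  have w3 : ∀ i, f (ww i) ≠ f (vv 0) := fun i h => by simpa [ww, vv] using hinj h
  have wl : ∀ i, f (ww i) ≤ r + 4 := fun i => by simpa using hle (ww i)
  have hA := (hp (f z2)).1 (Or.inl (Or.inl (by rw [hz]; simp [Nat.dist])))
  have hB := (hp (f (vv 0))).1 (Or.inl (Or.inr (by rw [hz]; simp [Nat.dist])))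
  have key : ∀ k, 1 ≤ k → k ≤ r + 2 → k = f z2 ∨ k = f (vv 0) ∨
      ∃ x, 3 ≤ x ∧ x ≤ r + 4 ∧ x ≠ f (vv 0) ∧ (f z2 + k = x ∨ x + k = f z2) := by
    intro k hk1 hk2
    rcases (hp k).2 ⟨hk1, hk2⟩ with (h | h) | ⟨i, h⟩
    · left; rw [hz] at h; simpa [Nat.dist] using h
    · right; left; rw [hz] at h; simpa [Nat.dist] using h
    · right; right
      have := w0 i
      have := w1 i
      have := w2 i
      refine ⟨f (ww i), by omega, wl i, w3 i, ?_⟩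
      unfold Nat.dist at h
      omega
  have k1 := key (r + 2) (by omega) (by omega)
  have k2 := key (r + 1) (by omega) (by omega)
  have k3 := key r (by omega) (by omega)
  have k4 := key (r - 1) (by omega) (by omega)
  rcases k1 with k1 | k1 | ⟨x1, k1⟩ <;> rcases k2 with k2 | k2 | ⟨x2, k2⟩ <;>
    rcases k3 with k3 | k3 | ⟨x3, k3⟩ <;> rcases k4 with k4 | k4 | ⟨x4, k4⟩ <;> omega
end

section
/- Let S(l,r) be the signed double star consisting of a positive central edge z₁z₂, together with l positive pendant edges z₁v₁,…,z₁v_l and two negative pendant edges z₁u₁, z₁u₂ attached at z₁, and r positive pendant edges z₂w₁,…,z₂w_r attached at z₂ (so S(l,r) is a (l+r+4, l+r+1, 2) signed graph). If l ≥ 2, r ≥ 2, and l is even, then S(l,r) is additively graceful. -/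
theorem card_pos_doubleStar (l r : ℕ) : (doubleStarPos l 2 r).posEdges.card = l + r + 1 := by
  unfold doubleStarPos
  dsimp only
  rw [Finset.card_union_of_disjoint, Finset.card_union_of_disjoint, Finset.card_singleton,
    Finset.card_image_of_injective, Finset.card_image_of_injective]
  · simp; omega
  · intro i j h
    simpa [z1, z2, vv, uu, ww, Sym2.eq_iff] using h
  · intro i j h
    simpa [z1, z2, vv, uu, ww, Sym2.eq_iff] using h
  · rw [Finset.disjoint_left]
    intro e he1 he2
    simp only [Finset.mem_singleton, Finset.mem_image, Finset.mem_univ, true_and] at he1 he2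
    subst he1
    obtain ⟨j, h⟩ := he2
    simp [z1, z2, vv, uu, ww, Sym2.eq_iff] at h
  · rw [Finset.disjoint_left]
    intro e he1 he2
    simp only [Finset.mem_union, Finset.mem_singleton, Finset.mem_image,
      Finset.mem_univ, true_and] at he1 he2
    obtain ⟨j, rfl⟩ := he2
    rcases he1 with h | ⟨i, h⟩ <;>
      simp [z1, z2, vv, uu, ww, Sym2.eq_iff] at h

theorem card_neg_doubleStar (l r : ℕ) : (doubleStarPos l 2 r).negEdges.card = 2 := by
  unfold doubleStarPos
  dsimp only
  rw [Finset.card_image_of_injective]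
  · simp
  · intro i j h
    simpa [z1, z2, vv, uu, ww, Sym2.eq_iff] using h

/-- The labeling used, with `l = k + k`. -/
def dsLabel (k l r : ℕ) : DSV l 2 r → ℕ
  | Sum.inl (Sum.inl _) => 0
  | Sum.inl (Sum.inr _) => 2 * k + r + 1
  | Sum.inr (Sum.inl i) => if i.val + 1 < k then i.val + 3 else i.val + r + 1
  | Sum.inr (Sum.inr (Sum.inl i)) => i.val + 1
  | Sum.inr (Sum.inr (Sum.inr j)) => if j.val + 2 < r then k + 2 + j.val else j.val + 2 * k + 4

/-- The signed double star with positive central edge `z₁z₂`,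
`l` positive and `2` negative pendant edges at `z₁`, and `r` positive pendant
edges at `z₂`, is additively graceful when `l ≥ 2`, `r ≥ 2` and `l` is even. -/
theorem doubleStar_twoNeg_addGraceful_of_even_l (l r : ℕ) (hl : 2 ≤ l) (hr : 2 ≤ r)
    (hle : Even l) :
    ∃ f : DSV l 2 r → ℕ, IsAddGraceful (doubleStarPos l 2 r) f := by
  obtain ⟨k, hk⟩ := hle
  refine ⟨dsLabel k l r, ?_, ?_, ?_, ?_⟩
  · rintro ((⟨⟩ | ⟨⟩) | (i | i | i)) ((⟨⟩ | ⟨⟩) | (j | j | j)) h <;>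
      simp only [dsLabel] at h <;>
      first
      | rfl
      | (exfalso; have := i.2; have := j.2; split_ifs at h <;> omega)
      | (exfalso; have := i.2; split_ifs at h <;> omega)
      | (exfalso; have := j.2; split_ifs at h <;> omega)
      | (exfalso; omega)
      | (have hij : i = j := by
          have := i.2
          have := j.2
          apply Fin.ext
          first
          | omega
          | (split_ifs at h <;> omega)
         rw [hij])
  · rw [card_pos_doubleStar, card_neg_doubleStar]
    rintro ((⟨⟩ | ⟨⟩) | (i | i | i)) <;> simp only [dsLabel]
    · omega
    · omega
    · have := i.2
      split_ifs <;> omega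
    · omega
    · have := i.2
      split_ifs <;> omega
  · rw [card_pos_doubleStar]
    ext x
    simp only [doubleStarPos, Finset.mem_image, Finset.mem_union, Finset.mem_singleton,
      Finset.mem_univ, true_and, Finset.mem_Icc]
    constructor
    · rintro ⟨e, (rfl | ⟨i, rfl⟩) | ⟨i, rfl⟩, rfl⟩ <;>
        simp only [posLabel, Sym2.lift_mk, z1, z2, vv, ww, dsLabel, Nat.dist]
      · omega
      · have := i.2
        split_ifs <;> omega
      · have := i.2
        split_ifs <;> omega
    · rintro ⟨h1, h2⟩
      have hv : ∀ i : Fin l, dsLabel k l r (vv i) = x → ∃ a, ((a = s(z1, z2) ∨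
          ∃ i : Fin l, s(z1, vv i) = a) ∨ ∃ i : Fin r, s(z2, ww i) = a) ∧
          posLabel (dsLabel k l r) a = x := by
        intro i hi
        refine ⟨_, Or.inl (Or.inr ⟨i, rfl⟩), ?_⟩
        simp only [posLabel, Sym2.lift_mk, hi]
        simp only [z1, dsLabel, Nat.dist]
        omega
      have hw : ∀ i : Fin r, Nat.dist (2 * k + r + 1) (dsLabel k l r (ww i)) = x →
          ∃ a, ((a = s(z1, z2) ∨
          ∃ i : Fin l, s(z1, vv i) = a) ∨ ∃ i : Fin r, s(z2, ww i) = a) ∧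
          posLabel (dsLabel k l r) a = x := by
        intro i hi
        refine ⟨_, Or.inr ⟨i, rfl⟩, ?_⟩
        simp only [posLabel, Sym2.lift_mk]
        exact hi
      by_cases c1 : x ≤ 2
      · apply hw ⟨r + x - 3, by omega⟩
        simp only [ww, dsLabel, Nat.dist]
        split_ifs <;> omega
      by_cases c2 : x ≤ k + 1
      · apply hv ⟨x - 3, by omega⟩
        simp only [vv, dsLabel]
        split_ifs <;> omega
      by_cases c3 : x ≤ k + r - 1
      · apply hw ⟨k + r - 1 - x, by omega⟩
        simp only [ww, dsLabel, Nat.dist]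
        split_ifs <;> omega
      by_cases c4 : x ≤ 2 * k + r
      · apply hv ⟨x - r - 1, by omega⟩
        simp only [vv, dsLabel]
        split_ifs <;> omega
      · refine ⟨_, Or.inl (Or.inl rfl), ?_⟩
        simp only [posLabel, Sym2.lift_mk, z1, z2, dsLabel, Nat.dist]
        omega
  · rw [card_neg_doubleStar]
    ext x
    simp only [doubleStarPos, Finset.mem_image,
      Finset.mem_univ, true_and, Finset.mem_Icc]
    constructor
    · rintro ⟨e, ⟨i, rfl⟩, rfl⟩
      simp only [negLabel, Sym2.lift_mk, z1, uu, dsLabel]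
      omega
    · rintro ⟨h1, h2⟩
      refine ⟨_, ⟨⟨x - 1, by omega⟩, rfl⟩, ?_⟩
      simp only [negLabel, Sym2.lift_mk, z1, uu, dsLabel]
      omega
end

section
/- Let S be the signed double star consisting of a negative central edge z₁z₂, together with l ≥ 0 positive pendant edges z₁v₁,…,z₁v_l and one negative pendant edge z₁u attached at z₁, and r ≥ 0 positive pendant edges z₂w₁,…,z₂w_r attached at z₂ (so S is a (l+r+3, l+r, 2) signed graph). Then S is additively graceful if and only if l = 0. -/
theorem posEdges_card_aux (l r : ℕ) : (doubleStarNeg l 1 r).posEdges.card = l + r := by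
  unfold doubleStarNeg
  simp only
  rw [Finset.card_union_of_disjoint, Finset.card_image_of_injective,
    Finset.card_image_of_injective]
  · simp
  · intro i j h
    simpa [z2, ww] using h
  · intro i j h
    simpa [z1, vv] using h
  · rw [Finset.disjoint_left]
    intro e he1 he2
    simp only [Finset.mem_image, Finset.mem_univ, true_and] at he1 he2
    obtain ⟨i, rfl⟩ := he1
    obtain ⟨j, h⟩ := he2
    simp [z1, z2, vv, ww] at h

theorem negEdges_card_aux (l r : ℕ) : (doubleStarNeg l 1 r).negEdges.card = 2 := by
  unfold doubleStarNeg
  simp only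
  rw [Finset.card_union_of_disjoint, Finset.card_image_of_injective]
  · simp
  · intro i j h
    exact Subsingleton.elim _ _
  · rw [Finset.disjoint_left]
    intro e he1 he2
    simp only [Finset.mem_image, Finset.mem_univ, true_and, Finset.mem_singleton] at he1 he2
    subst he1
    obtain ⟨j, h⟩ := he2
    simp [z1, z2, uu] at h

theorem pos_image_aux (l r : ℕ) (f : DSV l 1 r → ℕ) (x : ℕ) :
    x ∈ (doubleStarNeg l 1 r).posEdges.image (posLabel f) ↔
      (∃ i : Fin l, Nat.dist (f z1) (f (vv i)) = x) ∨
      (∃ i : Fin r, Nat.dist (f z2) (f (ww i)) = x) := by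
  simp only [doubleStarNeg, Finset.mem_image, Finset.mem_union, Finset.mem_univ, true_and]
  constructor
  · rintro ⟨e, ⟨i, rfl⟩ | ⟨i, rfl⟩, h⟩
    · exact Or.inl ⟨i, h⟩
    · exact Or.inr ⟨i, h⟩
  · rintro (⟨i, h⟩ | ⟨i, h⟩)
    · exact ⟨_, Or.inl ⟨i, rfl⟩, h⟩
    · exact ⟨_, Or.inr ⟨i, rfl⟩, h⟩

theorem neg_image_aux (l r : ℕ) (f : DSV l 1 r → ℕ) (x : ℕ) :
    x ∈ (doubleStarNeg l 1 r).negEdges.image (negLabel f) ↔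
      f z1 + f z2 = x ∨ f z1 + f (uu 0) = x := by
  simp only [doubleStarNeg, Finset.mem_image, Finset.mem_union, Finset.mem_univ, true_and,
    Finset.mem_singleton]
  constructor
  · rintro ⟨e, rfl | ⟨i, rfl⟩, h⟩
    · exact Or.inl h
    · obtain rfl := Subsingleton.elim i 0
      exact Or.inr h
  · rintro (h | h)
    · exact ⟨_, Or.inl rfl, h⟩
    · exact ⟨_, Or.inr ⟨0, rfl⟩, h⟩

/-- The counting argument: a labeling shifted by two on one side only. -/
theorem sum_aux (l r : ℕ) (a : Fin l → ℕ) (b : Fin r → ℕ)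
    (hinj : Function.Injective (Sum.elim a b))
    (ha : ∀ i, 3 ≤ a i ∧ a i ≤ l + r + 2) (hb : ∀ i, 3 ≤ b i ∧ b i ≤ l + r + 2)
    (him : ∀ x, x ∈ Finset.Icc 1 (l + r) ↔ (∃ i, a i = x) ∨ (∃ i, b i - 2 = x)) : l = 0 := by
  have h1 : Finset.univ.image (Sum.elim a b) = Finset.Icc 3 (l + r + 2) := by
    apply Finset.eq_of_subset_of_card_le
    · intro x hx
      simp only [Finset.mem_image, Finset.mem_univ, true_and] at hx
      obtain ⟨i | i, rfl⟩ := hx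
      · simpa using ha i
      · simpa using hb i
    · rw [Finset.card_image_of_injective _ hinj]
      simp
  have h2 : Finset.univ.image (Sum.elim a (fun i => b i - 2)) = Finset.Icc 1 (l + r) := by
    ext x
    rw [him]
    simp
  have hinj2 : Set.InjOn (Sum.elim a (fun i => b i - 2))
      (Finset.univ : Finset (Fin l ⊕ Fin r)) := by
    rw [← Finset.card_image_iff, h2]
    simp
  have s1 : ∑ x ∈ Finset.Icc 3 (l + r + 2), x = ∑ i, a i + ∑ i, b i := by
    rw [← h1, Finset.sum_image hinj.injOn]
    simp
  have s2 : ∑ x ∈ Finset.Icc 1 (l + r), x = ∑ i, a i + ∑ i, (b i - 2) := by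
    rw [← h2, Finset.sum_image hinj2]
    simp
  have s3 : ∑ i, b i = ∑ i, (b i - 2) + 2 * r := by
    have : ∀ i, b i = (b i - 2) + 2 := fun i => by have := hb i; omega
    rw [Finset.sum_congr rfl (fun i _ => this i), Finset.sum_add_distrib]
    simp [mul_comm]
  have s4 : ∀ n, ∑ x ∈ Finset.Icc 3 (n + 2), x = ∑ x ∈ Finset.Icc 1 n, x + 2 * n := by
    intro n
    induction n with
    | zero => simp
    | succ k ih =>
      rw [show k + 1 + 2 = (k + 2) + 1 by ring,
        Finset.sum_Icc_succ_top (a := 3) (b := k + 2) (by omega),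
        Finset.sum_Icc_succ_top (a := 1) (b := k) (by omega), ih]
      ring
  have := s4 (l + r)
  omega

/-- The signed double star with negative central edge `z₁z₂`,
`l` positive pendant edges and one negative pendant edge at `z₁`, and `r`
positive pendant edges at `z₂`, is additively graceful if and only if `l = 0`. -/
theorem doubleStar_negCenter_onePendantNeg_addGraceful_iff (l r : ℕ) :
    (∃ f : DSV l 1 r → ℕ, IsAddGraceful (doubleStarNeg l 1 r) f) ↔ l = 0 := by
  constructor
  · rintro ⟨f, hinj, hle, hpos, hneg⟩
    rw [posEdges_card_aux, negEdges_card_aux] at hle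
    rw [posEdges_card_aux] at hpos
    rw [negEdges_card_aux] at hneg
    have hp := fun x => pos_image_aux l r f x
    have hn := fun x => neg_image_aux l r f x
    rw [hpos] at hp
    rw [hneg] at hn
    have n1 := (hn 1).1 (by simp)
    have n2 := (hn 2).1 (by simp)
    have d12 : f z1 ≠ f z2 := fun h => by simpa [z1, z2] using hinj h
    have d1u : f z1 ≠ f (uu 0) := fun h => by simpa [z1, uu] using hinj h
    have hz1 : f z1 = 0 := by omega
    have hcases : (f z2 = 1 ∧ f (uu 0) = 2) ∨ (f z2 = 2 ∧ f (uu 0) = 1) := by omega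
    have hv : ∀ i : Fin l, 3 ≤ f (vv i) ∧ f (vv i) ≤ l + r + 2 := by
      intro i
      have e1 : f z1 ≠ f (vv i) := fun h => by simpa [z1, vv] using hinj h
      have e2 : f z2 ≠ f (vv i) := fun h => by simpa [z2, vv] using hinj h
      have e3 : f (uu 0) ≠ f (vv i) := fun h => by simpa [uu, vv] using hinj h
      have := hle (vv i)
      omega
    have hw : ∀ i : Fin r, 3 ≤ f (ww i) ∧ f (ww i) ≤ l + r + 2 := by
      intro i
      have e1 : f z1 ≠ f (ww i) := fun h => by simpa [z1, ww] using hinj h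
      have e2 : f z2 ≠ f (ww i) := fun h => by simpa [z2, ww] using hinj h
      have e3 : f (uu 0) ≠ f (ww i) := fun h => by simpa [uu, ww] using hinj h
      have := hle (ww i)
      omega
    rcases hcases with ⟨h2, -⟩ | ⟨h2, -⟩
    · by_contra hl
      have := (hp 1).1 (by simp; omega)
      rcases this with ⟨i, h⟩ | ⟨i, h⟩
      · have := hv i
        rw [hz1] at h
        unfold Nat.dist at h
        omega
      · have := hw i
        rw [h2] at h
        unfold Nat.dist at h
        omega
    · refine sum_aux l r (fun i => f (vv i)) (fun i => f (ww i)) ?_ hv hw ?_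
      · rintro (i | i) (j | j) h
        · simpa [vv] using hinj h
        · simpa [vv, ww] using hinj h
        · simpa [vv, ww] using hinj h
        · simpa [ww] using hinj h
      · intro x
        rw [hp x, hz1, h2]
        have k1 : ∀ i : Fin l, Nat.dist 0 (f (vv i)) = f (vv i) := fun i => by simp [Nat.dist]
        have k2 : ∀ i : Fin r, Nat.dist 2 (f (ww i)) = f (ww i) - 2 := fun i => by
          have := hw i
          unfold Nat.dist
          omega
        simp only [k1, k2]
  · rintro rfl
    refine ⟨Sum.elim (Sum.elim (fun _ => 0) (fun _ => 2))
      (Sum.elim (fun _ => 0) (Sum.elim (fun _ => 1) (fun i => i.val + 3))), ?_, ?_, ?_, ?_⟩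
    · rintro ((i | i) | (i | i | i)) ((j | j) | (j | j | j)) h
      all_goals first
        | exact i.elim0
        | exact j.elim0
        | rfl
        | (exfalso; simp at h; done)
        | (have := Subsingleton.elim i j; subst this; rfl)
        | (have : i = j := by
            apply Fin.ext
            simpa using h
           subst this; rfl)
    · rw [posEdges_card_aux, negEdges_card_aux]
      rintro ((i | i) | (i | i | i))
      all_goals first
        | exact i.elim0
        | (simp; done)
        | (simp; omega)
    · rw [posEdges_card_aux]
      ext x
      rw [pos_image_aux]
      simp only [z1, z2, ww, vv, Sum.elim_inl, Sum.elim_inr, Finset.mem_Icc, Nat.dist]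
      constructor
      · rintro (⟨i, h⟩ | ⟨i, h⟩)
        · exact i.elim0
        · have := i.isLt
          omega
      · rintro ⟨h1, h2⟩
        exact Or.inr ⟨⟨x - 1, by omega⟩, by simp only; omega⟩
    · rw [negEdges_card_aux]
      ext x
      rw [neg_image_aux]
      simp only [z1, z2, uu, Sum.elim_inl, Sum.elim_inr, Finset.mem_Icc]
      omega
end

section
/- Let S(3,r) be the signed double star consisting of a positive central edge z₁z₂, together with 3 positive pendant edges z₁v₁, z₁v₂, z₁v₃ and two negative pendant edges z₁u₁, z₁u₂ attached at z₁, and r positive pendant edges z₂w₁,…,z₂w_r attached at z₂ (so S(3,r) is a (r+7, r+4, 2) signed graph). If r is odd and r ≥ 7, then S(3,r) is not additively graceful. -/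
theorem core_arith (m a x y z : ℕ) (W : ℕ → Prop) (hm : 11 ≤ m) (hmo : m % 2 = 1)
    (ha : 3 ≤ a) (ham : a ≤ m) (hx : 3 ≤ x) (hxm : x ≤ m) (hy : 3 ≤ y) (hym : y ≤ m)
    (hz : 3 ≤ z) (hzm : z ≤ m) (hax : a ≠ x) (hay : a ≠ y) (haz : a ≠ z)
    (hxy : x ≠ y) (hxz : x ≠ z) (hyz : y ≠ z)
    (hW : ∀ k, W k → 3 ≤ k ∧ k ≤ m + 2 ∧ k ≠ a ∧ k ≠ x ∧ k ≠ y ∧ k ≠ z)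
    (hW' : ∀ k, 3 ≤ k → k ≤ m + 2 → k = a ∨ k = x ∨ k = y ∨ k = z ∨ W k)
    (hinj : ∀ d, 1 ≤ d → d ≤ a → W (a - d) → W (a + d) → False)
    (hcov : ∀ l, 1 ≤ l → l ≤ m → l = a ∨ l = x ∨ l = y ∨ l = z ∨ W (a + l) ∨ (l ≤ a ∧ W (a - l))) :
    False := by
  have pair : ∀ d, 1 ≤ d → d + 3 ≤ a → a + d ≤ m + 2 →
      ((x + d = a ∨ x = a + d) ∨ (y + d = a ∨ y = a + d) ∨ (z + d = a ∨ z = a + d)) := by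
    intro d h1 h2 h3
    have h4 := hinj d h1 (by omega)
    have h5 := hW' (a - d) (by omega) (by omega)
    have h6 := hW' (a + d) (by omega) (by omega)
    by_cases W1 : W (a - d)
    · have W2 : ¬ W (a + d) := fun h => h4 W1 h
      simp only [W2, or_false] at h6
      omega
    · simp only [W1, or_false] at h5
      omega
  have cov : ∀ l, 1 ≤ l → l ≤ m → l = a ∨ l = x ∨ l = y ∨ l = z ∨
      (a + l ≤ m + 2 ∧ a + l ≠ x ∧ a + l ≠ y ∧ a + l ≠ z) ∨
      (l + 3 ≤ a ∧ a ≠ x + l ∧ a ≠ y + l ∧ a ≠ z + l) := by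
    intro l h1 h2
    rcases hcov l h1 h2 with h | h | h | h | h | ⟨h', h⟩
    · omega
    · omega
    · omega
    · omega
    · have := hW _ h
      omega
    · have := hW _ h
      omega
  clear hcov hinj hW' hW
  have hcase : a = 3 ∨ a = 4 ∨ a = 5 ∨ a = 6 ∨ a = m - 1 ∨ a = m ∨ (7 ≤ a ∧ a + 2 ≤ m) := by omega
  rcases hcase with h | h | h | h | h | h | h
  · subst h
    have c1 := cov m (by omega) (by omega)
    have c2 := cov (m-3) (by omega) (by omega)
    have c3 := cov (m-6) (by omega) (by omega)
    have c4 := cov (m-9) (by omega) (by omega)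
    clear cov pair
    omega
  · subst h
    have c1 := cov m (by omega) (by omega)
    have c2 := cov (m-1) (by omega) (by omega)
    have p1 := pair 1 (by omega) (by omega) (by omega)
    have c3 := cov (m-4) (by omega) (by omega)
    have c4 := cov (m-5) (by omega) (by omega)
    clear cov pair
    omega
  · subst h
    have c1 := cov m (by omega) (by omega)
    have c2 := cov (m-1) (by omega) (by omega)
    have c3 := cov (m-2) (by omega) (by omega)
    have p1 := pair 1 (by omega) (by omega) (by omega)
    clear cov pair
    omega
  · subst h
    have c1 := cov m (by omega) (by omega)
    have c2 := cov (m-1) (by omega) (by omega)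
    have c3 := cov (m-2) (by omega) (by omega)
    have p1 := pair 1 (by omega) (by omega) (by omega)
    clear cov pair
    omega
  · have c1 := cov m (by omega) (by omega)
    have c2 := cov (m-2) (by omega) (by omega)
    have p1 := pair 2 (by omega) (by omega) (by omega)
    have p2 := pair 3 (by omega) (by omega) (by omega)
    clear cov pair
    omega
  · have p1 := pair 1 (by omega) (by omega) (by omega)
    have p2 := pair 2 (by omega) (by omega) (by omega)
    have key : ∀ t, (t = x ∨ t = y ∨ t = z) → 3 ≤ t → m < t + 3 := by
      intro t h2 h3
      by_contra h1
      have c := cov (m - t) (by omega) (by omega)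
      clear cov pair
      omega
    clear cov pair
    have kx := key x (by simp) hx
    have ky := key y (by simp) hy
    have kz := key z (by simp) hz
    omega
  · have p1 := pair 1 (by omega) (by omega) (by omega)
    have p2 := pair 2 (by omega) (by omega) (by omega)
    have p3 := pair 3 (by omega) (by omega) (by omega)
    have p4 := pair 4 (by omega) (by omega) (by omega)
    clear cov pair
    omega

theorem pos_card (r : ℕ) : (doubleStarPos 3 2 r).posEdges.card = r + 4 := by
  unfold doubleStarPos
  simp only
  rw [Finset.card_union_of_disjoint, Finset.card_union_of_disjoint,
    Finset.card_image_of_injective, Finset.card_image_of_injective]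
  · simp; omega
  · intro i j h
    simpa [z1, z2, vv, ww, Sym2.eq_iff] using h
  · intro i j h
    simpa [z1, z2, vv, ww, Sym2.eq_iff] using h
  · rw [Finset.disjoint_left]
    intro e h1 h2
    simp only [Finset.mem_singleton, Finset.mem_image, Finset.mem_univ, true_and] at h1 h2
    subst h1
    obtain ⟨i, h⟩ := h2
    simp [z1, z2, vv, ww, Sym2.eq_iff] at h
  · rw [Finset.disjoint_left]
    intro e h1 h2
    simp only [Finset.mem_union, Finset.mem_singleton, Finset.mem_image, Finset.mem_univ,
      true_and] at h1 h2
    obtain ⟨i, rfl⟩ := h2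
    rcases h1 with h | ⟨j, h⟩ <;> simp [z1, z2, vv, ww, Sym2.eq_iff] at h

theorem neg_card (r : ℕ) : (doubleStarPos 3 2 r).negEdges.card = 2 := by
  unfold doubleStarPos
  simp only
  rw [Finset.card_image_of_injective]
  · simp
  · intro i j h
    simpa [z1, uu, Sym2.eq_iff] using h

/-- The signed double star with positive central edge `z₁z₂`,
`3` positive and `2` negative pendant edges at `z₁`, and `r` positive pendant
edges at `z₂`, is not additively graceful when `r` is odd and `r ≥ 7`. -/
theorem doubleStar_twoNeg_l3_not_addGraceful_of_odd (r : ℕ) (hodd : Odd r) (hr : 7 ≤ r) :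
    ¬ ∃ f : DSV 3 2 r → ℕ, IsAddGraceful (doubleStarPos 3 2 r) f := by
  rintro ⟨f, hf, hle, hpos, hneg⟩
  have hInj : Set.InjOn (posLabel f) ((doubleStarPos 3 2 r).posEdges : Set (Sym2 (DSV 3 2 r))) := by
    rw [← Finset.card_image_iff, hpos]
    simp
  rw [pos_card, neg_card] at hle
  rw [pos_card] at hpos
  rw [neg_card] at hneg
  have e0 : s(z1, z2) ∈ (doubleStarPos 3 2 r).posEdges := by simp [doubleStarPos, z1, z2, vv, ww]
  have ev : ∀ i, s(z1, vv i) ∈ (doubleStarPos 3 2 r).posEdges := by simp [doubleStarPos, z1, z2, vv, ww]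
  have ew : ∀ i, s(z2, ww i) ∈ (doubleStarPos 3 2 r).posEdges := by simp [doubleStarPos, z1, z2, vv, ww]
  -- surjectivity onto the label range
  have hsurj : ∀ k, k ≤ r + 6 → ∃ v, f v = k := by
    have himg : Finset.univ.image f = Finset.range (r + 7) := by
      apply Finset.eq_of_subset_of_card_le
      · intro k hk
        simp only [Finset.mem_image, Finset.mem_univ, true_and] at hk
        obtain ⟨v, rfl⟩ := hk
        have := hle v
        simp only [Finset.mem_range]
        omega
      · rw [Finset.card_image_of_injective _ hf]
        simp [DSV]
        omega
    intro k hk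
    have : k ∈ Finset.univ.image f := by
      rw [himg, Finset.mem_range]; omega
    simpa using this
  -- negative edges
  have hn : ∀ i : Fin 2, 1 ≤ f z1 + f (uu i) ∧ f z1 + f (uu i) ≤ 2 := by
    intro i
    have : negLabel f s(z1, uu i) ∈ Finset.Icc 1 2 := by
      rw [← hneg]
      exact Finset.mem_image_of_mem _ (Finset.mem_image_of_mem _ (Finset.mem_univ i))
    simpa [negLabel] using this
  have hz1u : ∀ i : Fin 2, f z1 ≠ f (uu i) := fun i h => by
    simpa [z1, uu] using hf h
  have huu : f (uu 0) ≠ f (uu 1) := fun h => by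
    simpa [uu] using hf h
  have n0 := hn 0
  have n1 := hn 1
  have d0 := hz1u 0
  have d1 := hz1u 1
  have hz0 : f z1 = 0 := by omega
  have hp : ∀ e ∈ (doubleStarPos 3 2 r).posEdges, 1 ≤ posLabel f e ∧ posLabel f e ≤ r + 4 := by
    intro e he
    have : posLabel f e ∈ Finset.Icc 1 (r + 4) := by
      rw [← hpos]
      exact Finset.mem_image_of_mem _ he
    simpa using this
  have ge3 : ∀ v : DSV 3 2 r, v ≠ z1 → v ≠ uu 0 → v ≠ uu 1 → 3 ≤ f v := by
    intro v h1 h2 h3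
    have h1 := hf.ne h1
    have h2 := hf.ne h2
    have h3 := hf.ne h3
    omega
  have lab0 : posLabel f s(z1, z2) = f z2 := by simp [posLabel, Nat.dist, hz0]
  have labv : ∀ i, posLabel f s(z1, vv i) = f (vv i) := by simp [posLabel, Nat.dist, hz0]
  have labw : ∀ i, posLabel f s(z2, ww i) = Nat.dist (f z2) (f (ww i)) := by simp [posLabel]
  have zle : f z2 ≤ r + 4 := lab0 ▸ (hp _ e0).2
  have vle : ∀ i, f (vv i) ≤ r + 4 := fun i => labv i ▸ (hp _ (ev i)).2
  have v3 : ∀ i, 3 ≤ f (vv i) := fun i => ge3 _ (by simp [z1, vv]) (by simp [uu, vv]) (by simp [uu, vv])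
  have zv : ∀ i, f z2 ≠ f (vv i) := fun i => hf.ne (by simp [z2, vv])
  have vvne : ∀ i j : Fin 3, i ≠ j → f (vv i) ≠ f (vv j) := fun i j h => hf.ne (by simpa [vv] using h)
  refine core_arith (r + 4) (f z2) (f (vv 0)) (f (vv 1)) (f (vv 2)) (fun k => ∃ i, f (ww i) = k)
    (by omega) (by obtain ⟨k, hk⟩ := hodd; omega)
    (ge3 _ (by simp [z1, z2]) (by simp [uu, z2]) (by simp [uu, z2])) zle
    (v3 0) (vle 0) (v3 1) (vle 1) (v3 2) (vle 2) (zv 0) (zv 1) (zv 2)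
    (vvne _ _ (by decide)) (vvne _ _ (by decide)) (vvne _ _ (by decide)) ?_ ?_ ?_ ?_
  · rintro k ⟨i, rfl⟩
    refine ⟨ge3 _ (by simp [z1, ww]) (by simp [uu, ww]) (by simp [uu, ww]), ?_,
      hf.ne (by simp [z2, ww]), hf.ne (by simp [vv, ww]), hf.ne (by simp [vv, ww]),
      hf.ne (by simp [vv, ww])⟩
    have := hle (ww i)
    omega
  · intro k hk hk'
    obtain ⟨v, rfl⟩ := hsurj k (by omega)
    rcases v with (⟨⟩ | ⟨⟩) | i | i | i
    · change 3 ≤ f z1 at hk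
      omega
    · exact Or.inl rfl
    · change f (vv i) = _ ∨ f (vv i) = _ ∨ f (vv i) = _ ∨ f (vv i) = _ ∨ _
      fin_cases i <;> simp
    · change 3 ≤ f (uu i) at hk
      have := hn i
      omega
    · exact Or.inr (Or.inr (Or.inr (Or.inr ⟨i, rfl⟩)))
  · rintro d hd hda ⟨i, hi⟩ ⟨j, hj⟩
    have : (s(z2, ww i) : Sym2 (DSV 3 2 r)) = s(z2, ww j) := by
      apply hInj (ew i) (ew j)
      rw [labw, labw, hi, hj]
      simp only [Nat.dist]
      omega
    have hij : i = j := by simpa [z2, ww, Sym2.eq_iff] using this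
    subst hij
    omega
  · intro l hl hlm
    have : l ∈ Finset.image (posLabel f) (doubleStarPos 3 2 r).posEdges := by
      rw [hpos]; simp; omega
    obtain ⟨e, he, rfl⟩ := Finset.mem_image.1 this
    simp only [doubleStarPos, Finset.mem_union, Finset.mem_singleton, Finset.mem_image,
      Finset.mem_univ, true_and] at he
    rcases he with (rfl | ⟨i, rfl⟩) | ⟨i, rfl⟩
    · exact Or.inl lab0
    · rw [labv]
      fin_cases i <;> simp
    · rw [labw] at *
      simp only [Nat.dist] at *
      right; right; right; right
      rcases Nat.le_total (f z2) (f (ww i)) with h | h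
      · left
        exact ⟨i, by omega⟩
      · right
        exact ⟨by omega, i, by omega⟩
end
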